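/- arXiv:0709.1667 — 7 statements merged into one kernel-verified Lean document; each statement's English description precedes it below -/
import Mathlib

section
/- Let a k-SAT formula and a partial assignment x*:U→{0,1} be given. A variable i∈V∖U is directly implied by x*_U (via the unit-clause derivation closure) if and only if it is WP-implied, i.e. 𝔲_{a→i}=I for some a∈∂i in the least WP fixed point. -/
open scoped Classical

/-- A k-SAT formula over variables `V` with clause set `A`:
`scope a` is the set `∂a` of variables of clause `a`, and `z a i` is the
value of variable `i` that does NOT satisfy clause `a`. -/
structure KSAT (V A : Type) where
  scope : A → Finset V
  z : A → V → Bool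

namespace KSAT

variable {V A : Type}

/-- `∂i`: clauses containing variable `i`. -/
noncomputable def nbr [Fintype A] (Φ : KSAT V A) (i : V) : Finset A :=
  Finset.univ.filter fun a => i ∈ Φ.scope a

/-- `∂₊i`: clauses in `∂i` with `z(i,a) = 1`. -/
noncomputable def nbrPos [Fintype A] (Φ : KSAT V A) (i : V) : Finset A :=
  (Φ.nbr i).filter fun a => Φ.z a i = true

/-- `∂₋i`: clauses in `∂i` with `z(i,a) = 0`. -/
noncomputable def nbrNeg [Fintype A] (Φ : KSAT V A) (i : V) : Finset A :=
  (Φ.nbr i).filter fun a => Φ.z a i = false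

/-- `∂₋i(a)`: clauses `b ∈ ∂i ∖ {a}` that disagree with `a` on the satisfying
value of `x_i`. -/
noncomputable def disag [Fintype A] [DecidableEq A] (Φ : KSAT V A) (i : V) (a : A) : Finset A :=
  ((Φ.nbr i).erase a).filter fun b => Φ.z b i = !Φ.z a i

/-- `∂₊i(a)`: clauses `b ∈ ∂i ∖ {a}` that agree with `a` on the satisfying
value of `x_i`. -/
noncomputable def agree [Fintype A] [DecidableEq A] (Φ : KSAT V A) (i : V) (a : A) : Finset A :=
  ((Φ.nbr i).erase a).filter fun b => Φ.z b i = Φ.z a i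

/-- Warning propagation update for a variable-to-clause message `𝔥_{i→a}`,
computed from the clause-to-variable messages `u`.  Messages take values in
`Bool`, with `false` standing for `0` and `true` for `I`. -/
noncomputable def stepH [Fintype A] [DecidableEq A] (Φ : KSAT V A) (U : Finset V)
    (xs : V → Bool) (u : A → V → Bool) (i : V) (a : A) : Bool :=
  decide ((i ∈ U ∧ xs i = Φ.z a i) ∨ ∃ b ∈ Φ.disag i a, u b i = true)

/-- Warning propagation update for a clause-to-variable message `𝔲_{a→i}`,
computed from the variable-to-clause messages `h`. -/
noncomputable def stepU [DecidableEq V] (Φ : KSAT V A) (h : V → A → Bool)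
    (a : A) (i : V) : Bool :=
  decide (∀ j ∈ (Φ.scope a).erase i, h j a = true)

/-- A WP fixed point: the update equations hold on every directed edge of the
factor graph. -/
def IsWPFixedPoint [Fintype A] [DecidableEq V] [DecidableEq A] (Φ : KSAT V A)
    (U : Finset V) (xs : V → Bool) (h : V → A → Bool) (u : A → V → Bool) : Prop :=
  ∀ a : A, ∀ i ∈ Φ.scope a,
    h i a = Φ.stepH U xs u i a ∧ u a i = Φ.stepU h a i

end KSAT

namespace KSAT

/-- The derivation closure of the partial assignment `(U, xs)` under
unit-clause propagation: `Derived Φ U xs i v` means the pair `(i, v)` belongs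
to the smallest set of (variable, value) pairs containing `(i, xs i)` for
every `i ∈ U` and closed under unit-clause propagation. -/
inductive Derived [DecidableEq V] (Φ : KSAT V A) (U : Finset V) (xs : V → Bool) :
    V → Bool → Prop
  | fixed (i : V) (hi : i ∈ U) : Derived Φ U xs i (xs i)
  | ucp (a : A) (i : V) (hia : i ∈ Φ.scope a)
      (hrest : ∀ j ∈ (Φ.scope a).erase i, Derived Φ U xs j (Φ.z a j)) :
      Derived Φ U xs i (!Φ.z a i)

end KSAT

/-!
Declaring `𝔥_{i→a} = I` exactly when `(i, z(i,a))` is derived gives a WP fixed point, because the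
update rules are the rules of the derivation closure read along the edges of the factor graph.
Conversely, induction on derivations shows that every fixed point sends `𝔥_{i→a} = I` whenever
`(i, z(i,a))` is derived. So the least fixed point is the one given by derivations, and a warning
`𝔲_{a→i} = I` in it says that clause `a` derives `(i, 1 - z(i,a))` by unit-clause propagation.
-/

namespace KSAT

variable {V A : Type}

/-- The least WP fixed point: the minimum of all fixed points for the componentwise order on
messages. Only messages along edges of the factor graph are compared, as the values of `h` and `u`
at other pairs have no meaning. -/
structure IsLeastWPFixedPoint [Fintype A] [DecidableEq V] [DecidableEq A] (Φ : KSAT V A)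
    (U : Finset V) (xs : V → Bool) (h : V → A → Bool) (u : A → V → Bool) : Prop where
  isWPFixedPoint : Φ.IsWPFixedPoint U xs h u
  le : ∀ h₁ u₁, Φ.IsWPFixedPoint U xs h₁ u₁ →
    ∀ a : A, ∀ i ∈ Φ.scope a, h i a ≤ h₁ i a ∧ u a i ≤ u₁ a i

/-- The variable-to-clause messages read off from the derivation closure: `i` warns `a` when the
value of `i` that does not satisfy `a` is derived. -/
noncomputable def derivedMessage [DecidableEq V] (Φ : KSAT V A) (U : Finset V) (xs : V → Bool)
    (i : V) (a : A) : Bool :=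
  decide (Derived Φ U xs i (Φ.z a i))

variable {Φ : KSAT V A} {U : Finset V} {xs : V → Bool} {h : V → A → Bool} {u : A → V → Bool}
  {i : V} {a : A} {v : Bool}

theorem mem_disag [Fintype A] [DecidableEq A] {b : A} :
    b ∈ Φ.disag i a ↔ i ∈ Φ.scope b ∧ Φ.z a i = !Φ.z b i := by
  simp only [disag, nbr, Finset.mem_filter, Finset.mem_erase, Finset.mem_univ, true_and]
  constructor
  · rintro ⟨⟨-, hib⟩, hz⟩
    exact ⟨hib, by simp [hz]⟩
  · rintro ⟨hib, hz⟩
    refine ⟨⟨?_, hib⟩, by simp [hz]⟩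
    rintro rfl
    exact Bool.eq_not.mp hz rfl

theorem stepH_eq_true_iff [Fintype A] [DecidableEq A] :
    Φ.stepH U xs u i a = true ↔
      (i ∈ U ∧ xs i = Φ.z a i) ∨
        ∃ b, i ∈ Φ.scope b ∧ Φ.z a i = !Φ.z b i ∧ u b i = true := by
  simp only [stepH, decide_eq_true_iff, mem_disag, and_assoc]

theorem stepU_eq_true_iff [DecidableEq V] :
    Φ.stepU h a i = true ↔ ∀ j ∈ (Φ.scope a).erase i, h j a = true := by
  simp only [stepU, decide_eq_true_iff]

theorem derivedMessage_eq_true_iff [DecidableEq V] :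
    Φ.derivedMessage U xs i a = true ↔ Derived Φ U xs i (Φ.z a i) :=
  decide_eq_true_iff

theorem derived_iff_mem_or_stepU [DecidableEq V] :
    Derived Φ U xs i v ↔
      (i ∈ U ∧ xs i = v) ∨
        ∃ a, i ∈ Φ.scope a ∧ v = !Φ.z a i ∧ Φ.stepU (Φ.derivedMessage U xs) a i = true := by
  simp only [stepU_eq_true_iff, derivedMessage_eq_true_iff]
  constructor
  · rintro (⟨_, hi⟩ | ⟨a, _, hia, hrest⟩)
    · exact .inl ⟨hi, rfl⟩
    · exact .inr ⟨a, hia, rfl, hrest⟩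
  · rintro (⟨hi, rfl⟩ | ⟨a, hia, rfl, hrest⟩)
    · exact .fixed i hi
    · exact .ucp a i hia hrest

section WarningPropagation

variable [Fintype A] [DecidableEq V] [DecidableEq A]

theorem isWPFixedPoint_derivedMessage :
    Φ.IsWPFixedPoint U xs (Φ.derivedMessage U xs) (Φ.stepU (Φ.derivedMessage U xs)) := by
  refine fun a i _ => ⟨?_, rfl⟩
  rw [Bool.eq_iff_iff, derivedMessage_eq_true_iff, stepH_eq_true_iff]
  exact derived_iff_mem_or_stepU

theorem IsWPFixedPoint.eq_true_of_derived (hfp : Φ.IsWPFixedPoint U xs h u)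
    (hd : Derived Φ U xs i (Φ.z a i)) (hia : i ∈ Φ.scope a) : h i a = true := by
  generalize hv : Φ.z a i = v at hd
  induction hd generalizing a with
  | fixed i hi =>
    rw [(hfp a i hia).1, stepH_eq_true_iff]
    exact .inl ⟨hi, hv.symm⟩
  | ucp b i hib _ ih =>
    have hub : u b i = true := by
      rw [(hfp b i hib).2, stepU_eq_true_iff]
      exact fun j hj => ih j hj (Finset.mem_of_mem_erase hj) rfl
    rw [(hfp a i hia).1, stepH_eq_true_iff]
    exact .inr ⟨b, hib, hv, hub⟩

namespace IsLeastWPFixedPoint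

theorem eq_derivedMessage (hmin : Φ.IsLeastWPFixedPoint U xs h u) (hia : i ∈ Φ.scope a) :
    h i a = Φ.derivedMessage U xs i a := by
  rw [Bool.eq_iff_iff]
  constructor
  · exact (hmin.le _ _ isWPFixedPoint_derivedMessage a i hia).1
  · exact fun hd =>
      hmin.isWPFixedPoint.eq_true_of_derived (derivedMessage_eq_true_iff.mp hd) hia

theorem eq_stepU_derivedMessage (hmin : Φ.IsLeastWPFixedPoint U xs h u) (hia : i ∈ Φ.scope a) :
    u a i = Φ.stepU (Φ.derivedMessage U xs) a i := by
  rw [(hmin.isWPFixedPoint a i hia).2, Bool.eq_iff_iff, stepU_eq_true_iff, stepU_eq_true_iff]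
  exact forall₂_congr fun j hj => by rw [hmin.eq_derivedMessage (Finset.mem_of_mem_erase hj)]

end IsLeastWPFixedPoint

end WarningPropagation

end KSAT

theorem directly_implied_iff_wp_implied_general
    {V A : Type} [Fintype A] [DecidableEq V] [DecidableEq A]
    {Φ : KSAT V A} {U : Finset V} {xs : V → Bool} {h : V → A → Bool} {u : A → V → Bool}
    (hmin : Φ.IsLeastWPFixedPoint U xs h u) (i : V) (v : Bool) :
    KSAT.Derived Φ U xs i v ↔
      (i ∈ U ∧ xs i = v) ∨ ∃ a, i ∈ Φ.scope a ∧ v = !Φ.z a i ∧ u a i = true := by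
  rw [KSAT.derived_iff_mem_or_stepU]
  refine or_congr_right (exists_congr fun a => and_congr_right fun hia => ?_)
  rw [hmin.eq_stepU_derivedMessage hia]

/-- a variable `i ∉ U` is directly implied by the partial
assignment `xs` on `U` (i.e. it gets a value in the unit-clause derivation
closure) if and only if it is WP-implied, i.e. it receives a message
`𝔲_{a→i} = I` in the least WP fixed point. -/
theorem directly_implied_iff_wp_implied
    {V A : Type} [Fintype V] [Fintype A] [DecidableEq V] [DecidableEq A]
    (k : ℕ) (Φ : KSAT V A) (hk : ∀ a : A, (Φ.scope a).card = k)
    (U : Finset V) (xs : V → Bool)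
    (h : V → A → Bool) (u : A → V → Bool)
    (hfp : Φ.IsWPFixedPoint U xs h u)
    (hleast : ∀ h₁ u₁, Φ.IsWPFixedPoint U xs h₁ u₁ →
      ∀ a : A, ∀ i ∈ Φ.scope a, h i a ≤ h₁ i a ∧ u a i ≤ u₁ a i)
    (i : V) (hiU : i ∉ U) :
    (∃ v : Bool, KSAT.Derived Φ U xs i v) ↔
      (∃ a : A, i ∈ Φ.scope a ∧ u a i = true) := by
  simp only [directly_implied_iff_wp_implied_general ⟨hfp, hleast⟩, hiU, false_and, false_or]
  exact exists_comm.trans (exists_congr fun a => by simp)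
end

section
/- Let F be a k-SAT formula in which every clause contains at least 2 distinct variables, and suppose the factor graph of F is acyclic (a forest). Then F is satisfiable. -/
open scoped Classical

namespace KSAT

variable {V A : Type}

/-- An assignment satisfies clause `a` iff some variable of `∂a` differs from
its unsatisfying value. -/
def Satisfies (Φ : KSAT V A) (x : V → Bool) (a : A) : Prop :=
  ∃ i ∈ Φ.scope a, x i ≠ Φ.z a i

/-- A solution satisfies every clause. -/
def IsSolution (Φ : KSAT V A) (x : V → Bool) : Prop :=
  ∀ a : A, Φ.Satisfies x a

/-- The finite set of solutions of the formula. -/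
noncomputable def solutions [Fintype V] [DecidableEq V] (Φ : KSAT V A) :
    Finset (V → Bool) :=
  Finset.univ.filter fun x => Φ.IsSolution x

end KSAT

namespace KSAT

/-- The factor graph of a formula: the bipartite graph on `V ⊕ A` with an edge
between variable `i` and clause `a` iff `i ∈ ∂a`. -/
def factorGraph (Φ : KSAT V A) : SimpleGraph (V ⊕ A) :=
  SimpleGraph.fromRel fun x y =>
    match x, y with
    | Sum.inl i, Sum.inr a => i ∈ Φ.scope a
    | _, _ => False

end KSAT

/-!
Root every tree of the factor graph, so that of the two ends of each edge one is the parent of the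
other. A clause has at least two variables and at most one of them is its parent, so some variable
of the clause is its child. Distinct clauses have distinct children, and setting each chosen child
to the value its clause asks for satisfies all clauses at once.
-/

section Forest

variable {W : Type*} {G : SimpleGraph W}

lemma penultimate_eq_or_penultimate_eq_of_adj (hG : G.IsAcyclic) {r u v : W} (huv : G.Adj u v)
    {p : G.Walk r u} {q : G.Walk r v} (hp : p.IsPath) (hq : q.IsPath) :
    p.penultimate = v ∨ q.penultimate = u := by
  by_cases hv : v ∈ p.support
  · exact .inl (hG.eq_penultimate_of_adj_end hp huv hv).symm
  · have hu : u ∈ q.support :=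
      hG.mem_support_of_ne_mem_support_of_adj_of_isPath hq hp huv.symm hv
    exact .inr (hG.eq_penultimate_of_adj_end hq huv.symm hu).symm

lemma exists_parent_of_isAcyclic (hG : G.IsAcyclic) :
    ∃ parent : W → W, ∀ ⦃u v⦄, G.Adj u v → parent u = v ∨ parent v = u := by
  let root (v : W) : W := (G.connectedComponentMk v).out
  have root_eq {u v : W} (huv : G.Adj u v) : root v = root u :=
    congrArg Quot.out (SimpleGraph.ConnectedComponent.sound huv.symm.reachable)
  have exists_path (v : W) :
      ∃ w, ∃ p : G.Walk (root v) v, p.IsPath ∧ p.penultimate = w := by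
    have hreach : G.Reachable (root v) v := SimpleGraph.ConnectedComponent.exact (Quot.out_eq _)
    obtain ⟨p, hp⟩ := hreach.exists_isPath
    exact ⟨_, p, hp, rfl⟩
  choose parent hparent using exists_path
  refine ⟨parent, fun u v huv => ?_⟩
  have hv := hparent v
  rw [root_eq huv] at hv
  obtain ⟨p, hp, hpu⟩ := hparent u
  obtain ⟨q, hq, hqv⟩ := hv
  rw [← hpu, ← hqv]
  exact penultimate_eq_or_penultimate_eq_of_adj hG huv hp hq

end Forest

namespace KSAT

variable {V A : Type} {Φ : KSAT V A}

lemma factorGraph_adj_inr_inl {a : A} {i : V} :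
    Φ.factorGraph.Adj (.inr a) (.inl i) ↔ i ∈ Φ.scope a := by
  simp [factorGraph]

lemma exists_isSolution_of_injective {c : A → V} (hinj : c.Injective)
    (hmem : ∀ a, c a ∈ Φ.scope a) : ∃ x, Φ.IsSolution x := by
  refine ⟨Function.extend c (fun a => !Φ.z a (c a)) fun _ => false, fun a => ⟨c a, hmem a, ?_⟩⟩
  rw [hinj.extend_apply]
  exact Bool.not_ne_self _

lemma exists_injective_mem_scope (hk : ∀ a, 2 ≤ (Φ.scope a).card)
    (hacyc : Φ.factorGraph.IsAcyclic) :
    ∃ c : A → V, c.Injective ∧ ∀ a, c a ∈ Φ.scope a := by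
  obtain ⟨parent, hparent⟩ := exists_parent_of_isAcyclic hacyc
  have exists_child (a : A) : ∃ i ∈ Φ.scope a, parent (.inl i) = .inr a := by
    obtain ⟨i, hi, j, hj, hij⟩ := Finset.one_lt_card.mp (hk a)
    obtain hai | hia := hparent (factorGraph_adj_inr_inl.mpr hi)
    · obtain haj | hja := hparent (factorGraph_adj_inr_inl.mpr hj)
      · exact absurd (Sum.inl_injective (hai.symm.trans haj)) hij
      · exact ⟨j, hj, hja⟩
    · exact ⟨i, hi, hia⟩
  choose c hmem hparent_c using exists_child
  refine ⟨c, fun a b hab => Sum.inr_injective (α := V) ?_, hmem⟩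
  rw [← hparent_c a, ← hparent_c b, hab]

end KSAT

theorem forest_formula_satisfiable_general {V A : Type} (Φ : KSAT V A)
    (hk : ∀ a : A, 2 ≤ (Φ.scope a).card) (hacyc : Φ.factorGraph.IsAcyclic) :
    ∃ x : V → Bool, Φ.IsSolution x := by
  obtain ⟨c, hinj, hmem⟩ := KSAT.exists_injective_mem_scope hk hacyc
  exact KSAT.exists_isSolution_of_injective hinj hmem

/-- a SAT formula in which every clause contains at least two
distinct variables and whose factor graph is acyclic (a forest) is
satisfiable. -/
theorem forest_formula_satisfiable
    {V A : Type} [Fintype V] [Fintype A] [DecidableEq V]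
    (Φ : KSAT V A) (hk : ∀ a : A, 2 ≤ (Φ.scope a).card)
    (hacyc : Φ.factorGraph.IsAcyclic) :
    ∃ x : V → Bool, Φ.IsSolution x :=
  forest_formula_satisfiable_general Φ hk hacyc
end

section
/- Let F be a k-SAT formula with k≥2 whose factor graph is a tree, and let μ be the uniform distribution over its (nonempty) set of solutions. Then the BP fixed point equations have a unique solution {h_{i→a},u_{a→i}}, and for every variable i and every v∈{0,1}, the BP marginal ν_i(v) computed from this fixed point equals the true marginal μ(x_i=v). -/
open scoped Classical

namespace KSAT

variable {V A : Type}

/-- The BP clause-to-variable update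
`f((h_{j→a})_{j ∈ ∂a∖i}) = -(1/2)·log(1 - 2^{-(k-1)}·∏ (1 - tanh h_{j→a}))`. -/
noncomputable def bpUval [DecidableEq V] (Φ : KSAT V A) (k : ℕ)
    (h : V → A → ℝ) (a : A) (i : V) : ℝ :=
  -(1 / 2) * Real.log
    (1 - (∏ j ∈ (Φ.scope a).erase i, (1 - Real.tanh (h j a))) / 2 ^ (k - 1))

/-- A BP fixed point: the BP update equations hold on every directed edge of
the factor graph. -/
def IsBPFixedPoint [Fintype A] [DecidableEq V] [DecidableEq A] (Φ : KSAT V A)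
    (k : ℕ) (h : V → A → ℝ) (u : A → V → ℝ) : Prop :=
  ∀ a : A, ∀ i ∈ Φ.scope a,
    h i a = (∑ b ∈ Φ.agree i a, u b i) - (∑ b ∈ Φ.disag i a, u b i) ∧
    u a i = Φ.bpUval k h a i

/-- The local field `h_i = Σ_{a ∈ ∂₊i} u_{a→i} - Σ_{a ∈ ∂₋i} u_{a→i}`. -/
noncomputable def field [Fintype A] (Φ : KSAT V A) (u : A → V → ℝ) (i : V) : ℝ :=
  (∑ a ∈ Φ.nbrPos i, u a i) - ∑ a ∈ Φ.nbrNeg i, u a i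

/-- The BP marginal `ν_i(v)`; the value `0` is encoded by `false` and `1` by
`true`, so `ν_i(0) = (1 + tanh h_i)/2` and `ν_i(1) = (1 - tanh h_i)/2`. -/
noncomputable def bpMarginal [Fintype A] (Φ : KSAT V A) (u : A → V → ℝ)
    (i : V) (v : Bool) : ℝ :=
  if v then (1 - Real.tanh (Φ.field u i)) / 2 else (1 + Real.tanh (Φ.field u i)) / 2

end KSAT

/-! Belief propagation on a forest. Each message is determined by messages strictly further along the
forest, so the fixed point equations are a well-founded recursion, which has exactly one solution.

For the marginals, put on assignments the product measure `π` of the BP marginals, and give clause `a`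
the weight `w_a`, which is `∏ exp (-u_{a→i} s_i)` over the signs `s_i = ±1` if `a` is satisfied and
`0` otherwise. Since `h_i` is the sum of the incoming `±u_{a→i}`, the exponentials cancel in
`π ∏ w_a`, which is therefore constant on solutions and `0` elsewhere. The fixed point equations say
that the conditional expectation of `w_a` under `π` given any one of its variables is constant.
Removing leaf clauses one at a time, never the side that contains `x_i`, then shows that weighting `π`
by `∏ w_a` does not change the law of `x_i`. -/

section Tree

variable {W : Type*} {G : SimpleGraph W}

lemma exists_isTree_ge_of_isAcyclic [Nonempty W] (hG : G.IsAcyclic) :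
    ∃ T : SimpleGraph W, G ≤ T ∧ T.IsTree := by
  obtain ⟨T, hGT, -, hT⟩ :=
    SimpleGraph.connected_top.exists_isTree_le_of_le_of_isAcyclic le_top hG
  exact ⟨T, hGT, hT⟩

lemma eq_of_adj_of_dist_lt (hG : G.IsTree) {w x y y' : W} (hy : G.Adj y x) (hy' : G.Adj y' x)
    (hlt : G.dist w y < G.dist w x) (hlt' : G.dist w y' < G.dist w x) : y = y' := by
  have path_through : ∀ t, (ht : G.Adj t x) → G.dist w t < G.dist w x →
      ∃ p : G.Walk w t, (p.concat ht).IsPath := fun t ht hdist => by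
    obtain ⟨p, hp⟩ := hG.connected.exists_walk_length_eq_dist w t
    refine ⟨p, (p.concat ht).isPath_of_length_eq_dist ?_⟩
    have := SimpleGraph.dist_le (p.concat ht)
    rw [p.length_concat] at this ⊢
    omega
  obtain ⟨p, hp⟩ := path_through y hy hlt
  obtain ⟨p', hp'⟩ := path_through y' hy' hlt'
  have hpp' : p.concat hy = p'.concat hy' :=
    congrArg Subtype.val ((hG.isAcyclic.subsingleton_path w x).elim ⟨_, hp⟩ ⟨_, hp'⟩)
  exact (SimpleGraph.Walk.concat_inj hpp').1

lemma dist_lt_dist_of_adj_of_ne (hG : G.IsTree) {w x y y' : W} (hy : G.Adj y x) (hy' : G.Adj x y')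
    (hne : y ≠ y') (hlt : G.dist w y < G.dist w x) : G.dist w x < G.dist w y' := by
  have := hG.dist_ne_of_adj w hy'
  by_contra! hle
  exact hne (eq_of_adj_of_dist_lt hG hy hy'.symm hlt (by omega))

/-- The component of `x` after deleting the edge `xy` of a tree, written as the set of vertices
strictly closer to `x` than to `y`. -/
def treeSide (G : SimpleGraph W) (x y : W) : Set W := {w | G.dist w x < G.dist w y}

lemma treeSide_ssubset (hG : G.IsTree) {x y z : W} (hxy : G.Adj x y) (hyz : G.Adj y z)
    (hxz : x ≠ z) : treeSide G x y ⊂ treeSide G y z := by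
  refine Set.ssubset_iff_exists.2
    ⟨fun w hw => dist_lt_dist_of_adj_of_ne hG hxy hyz hxz hw, y, ?_, ?_⟩
  · simpa [treeSide] using hG.connected.pos_dist_of_ne hyz.ne
  · simp [treeSide]

end Tree

section FixedPoint

variable {ι β : Type*} {r : ι → ι → Prop} {S : Set ι} {F : (ι → β) → ι → β}

lemma exists_fixedPoint_of_wellFounded [Inhabited β] (hr : WellFounded r)
    (hF : ∀ i ∈ S, ∀ f g : ι → β, (∀ j ∈ S, r j i → f j = g j) → F f i = F g i) :
    ∃ f, ∀ i ∈ S, f i = F f i := by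
  let recursion (i : ι) (f : ∀ j, r j i → β) : β :=
    F (fun j => if hj : r j i then f j hj else default) i
  refine ⟨hr.fix recursion, fun i hi => ?_⟩
  rw [hr.fix_eq]
  exact hF i hi _ _ fun j _ hj => dif_pos hj

lemma eqOn_of_fixedPoint_of_wellFounded (hr : WellFounded r)
    (hF : ∀ i ∈ S, ∀ f g : ι → β, (∀ j ∈ S, r j i → f j = g j) → F f i = F g i)
    {f g : ι → β} (hf : ∀ i ∈ S, f i = F f i) (hg : ∀ i ∈ S, g i = F g i) : Set.EqOn f g S := by
  intro i
  induction i using hr.induction with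
  | _ i ih =>
    intro hi
    rw [hf i hi, hg i hi]
    exact hF i hi f g fun j hj hji => ih j hji hj

end FixedPoint

section ProductExpectation

variable {V R : Type*} {α : V → Type*} [DecidableEq V]

lemma piecewise_swap_involutive (S : Finset V) : Function.Involutive
    fun q : (∀ i, α i) × (∀ i, α i) => (S.piecewise q.1 q.2, S.piecewise q.2 q.1) := by
  rintro ⟨x, y⟩
  ext i <;> by_cases hi : i ∈ S <;> simp [hi]

variable [Fintype V] [∀ i, Fintype (α i)]

/-- The expectation of `f` under the product of the (possibly signed) weights `π i`. -/
def prodExpect [CommSemiring R] (π : ∀ i, α i → R) (f : (∀ i, α i) → R) : R :=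
  ∑ x, (∏ i, π i (x i)) * f x

/-- The conditional expectation of `f` given the coordinates in `S`: those outside `S` are resampled
from the product of the weights `π i`. -/
def prodCondExp [CommSemiring R] (π : ∀ i, α i → R) (S : Finset V) (f : (∀ i, α i) → R)
    (x : ∀ i, α i) : R :=
  prodExpect π fun y => f (S.piecewise x y)

lemma prodExpect_const_mul [CommSemiring R] (π : ∀ i, α i → R) (c : R) (f : (∀ i, α i) → R) :
    prodExpect π (fun x => c * f x) = c * prodExpect π f := by
  simp only [prodExpect, Finset.mul_sum, mul_left_comm]

lemma prodCondExp_sub [CommRing R] (π : ∀ i, α i → R) (S : Finset V) (f g : (∀ i, α i) → R)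
    (x : ∀ i, α i) :
    prodCondExp π S (fun x => f x - g x) x = prodCondExp π S f x - prodCondExp π S g x := by
  simp only [prodCondExp, prodExpect, mul_sub, Finset.sum_sub_distrib]

variable [CommSemiring R] {π : ∀ i, α i → R}

lemma prodExpect_prod (hπ : ∀ i, ∑ v, π i v = 1) (T : Finset V) (g : ∀ i, α i → R) :
    prodExpect π (fun x => ∏ i ∈ T, g i (x i)) = ∏ i ∈ T, ∑ v, π i v * g i v := by
  have extend (x : ∀ i, α i) : (∏ i, π i (x i)) * ∏ i ∈ T, g i (x i) =
      ∏ i, π i (x i) * if i ∈ T then g i (x i) else 1 := by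
    rw [Finset.prod_mul_distrib, Finset.prod_ite_mem, Finset.univ_inter]
  simp only [prodExpect, extend]
  rw [← Fintype.prod_sum fun i v => π i v * if i ∈ T then g i v else 1,
    ← Finset.prod_subset (Finset.subset_univ T) fun i _ hi => by simp [hi, hπ]]
  exact Finset.prod_congr rfl fun i hi => by simp [hi]

lemma prodExpect_const (hπ : ∀ i, ∑ v, π i v = 1) (c : R) : prodExpect π (fun _ => c) = c := by
  simpa using (prodExpect_const_mul π c fun _ => 1).trans
    (congrArg (c * ·) (prodExpect_prod hπ ∅ fun _ _ => 1))

lemma prodExpect_apply (hπ : ∀ i, ∑ v, π i v = 1) (r : V) (g : α r → R) :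
    prodExpect π (fun x => g (x r)) = ∑ v, π r v * g v := by
  simpa using prodExpect_prod hπ {r} (Function.update (fun _ _ => 1) r g)

lemma prodCondExp_singleton_prod (hπ : ∀ i, ∑ v, π i v = 1) {T : Finset V} {p : V} (hp : p ∈ T)
    (g : ∀ i, α i → R) (x : ∀ i, α i) :
    prodCondExp π {p} (fun x => ∏ i ∈ T, g i (x i)) x =
      g p (x p) * ∏ i ∈ T.erase p, ∑ v, π i v * g i v := by
  rw [← prodExpect_prod hπ, ← prodExpect_const_mul, prodCondExp]
  refine congrArg _ (funext fun y => ?_)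
  rw [← Finset.mul_prod_erase _ _ hp]
  congr 1
  · simp
  · exact Finset.prod_congr rfl fun i hi => by simp [Finset.ne_of_mem_erase hi]

lemma prodExpect_prodCondExp (hπ : ∀ i, ∑ v, π i v = 1) (S : Finset V) (f : (∀ i, α i) → R) :
    prodExpect π (prodCondExp π S f) = prodExpect π f := by
  let mass (x : ∀ i, α i) : R := ∏ i, π i (x i)
  have mass_swap (x y : ∀ i, α i) :
      mass (S.piecewise x y) * mass (S.piecewise y x) = mass x * mass y := by
    simp only [mass, ← Finset.prod_mul_distrib]
    refine Finset.prod_congr rfl fun i _ => ?_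
    by_cases hi : i ∈ S <;> simp [hi, mul_comm]
  calc prodExpect π (prodCondExp π S f)
      = ∑ q : (∀ i, α i) × (∀ i, α i), mass q.1 * mass q.2 * f (S.piecewise q.1 q.2) := by
        simp only [prodExpect, prodCondExp, Finset.mul_sum, Fintype.sum_prod_type, mul_assoc, mass]
    _ = ∑ q : (∀ i, α i) × (∀ i, α i), mass q.1 * mass q.2 * f q.1 := by
        rw [← Equiv.sum_comp (piecewise_swap_involutive S).toPerm
          fun q => mass q.1 * mass q.2 * f q.1]
        simp only [Function.Involutive.coe_toPerm, mass_swap]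
    _ = prodExpect π fun x => prodExpect π fun _ => f x := by
        simp only [prodExpect, Finset.mul_sum, Fintype.sum_prod_type, mul_assoc, mass]
    _ = prodExpect π f := by simp only [prodExpect_const hπ]

lemma prodExpect_eq_of_prodCondExp_eq (hπ : ∀ i, ∑ v, π i v = 1) {S : Finset V}
    {f : (∀ i, α i) → R} {c : R} (hf : ∀ x, prodCondExp π S f x = c) : prodExpect π f = c := by
  rw [← prodExpect_prodCondExp hπ S, funext hf, prodExpect_const hπ]

lemma prodExpect_mul_of_prodCondExp_eq (hπ : ∀ i, ∑ v, π i v = 1) {S : Finset V}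
    {f g : (∀ i, α i) → R} {c : R} (hg : DependsOn g S) (hf : ∀ x, prodCondExp π S f x = c) :
    prodExpect π (fun x => f x * g x) = c * prodExpect π g := by
  have pull_out (x : ∀ i, α i) : prodCondExp π S (fun x => f x * g x) x = c * g x := by
    have hgx (y : ∀ i, α i) : g (S.piecewise x y) = g x :=
      hg fun i hi => S.piecewise_eq_of_mem _ _ hi
    simp only [prodCondExp, hgx, mul_comm _ (g x), prodExpect_const_mul]
    rw [← hf x, prodCondExp]
  rw [← prodExpect_prodCondExp hπ S, funext pull_out, prodExpect_const_mul]

lemma prodCondExp_congr_of_dependsOn {f : (∀ i, α i) → R} {D S S' : Finset V} (hf : DependsOn f D)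
    (hSS' : ∀ i ∈ D, i ∈ S ↔ i ∈ S') (x : ∀ i, α i) :
    prodCondExp π S f x = prodCondExp π S' f x := by
  refine congrArg (prodExpect π) (funext fun y => hf fun i hi => ?_)
  by_cases hiS : i ∈ S
  · simp [hiS, (hSS' i hi).1 hiS]
  · simp [hiS, mt (hSS' i hi).2 hiS]

/-- Rooted hyperforests: every nonempty set of hyperedges contains one that can be cut off as a
leaf, attached at its vertex `p`, without removing the root `r`. -/
def IsPeelable {A : Type*} (scope : A → Finset V) (r : V) : Prop :=
  ∀ B : Finset A, B.Nonempty → ∃ a ∈ B, ∃ p ∈ scope a,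
    ∀ j ∈ scope a, j ≠ p → j ≠ r ∧ ∀ b ∈ B, b ≠ a → j ∉ scope b

theorem prodExpect_prod_mul_of_isPeelable {A : Type*} (hπ : ∀ i, ∑ v, π i v = 1)
    {scope : A → Finset V} {r : V} (hpeel : IsPeelable scope r) {w : A → (∀ i, α i) → R}
    (hw : ∀ a, DependsOn (w a) (scope a))
    (hcond : ∀ a, ∀ p ∈ scope a, ∀ x, prodCondExp π {p} (w a) x = prodExpect π (w a))
    {f : (∀ i, α i) → R} (hf : DependsOn f {r}) (B : Finset A) :
    prodExpect π (fun x => (∏ a ∈ B, w a x) * f x) =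
      (∏ a ∈ B, prodExpect π (w a)) * prodExpect π f := by
  classical
  induction B using Finset.strongInduction with
  | H B ih =>
    obtain rfl | hB := B.eq_empty_or_nonempty
    · simp
    obtain ⟨a, haB, p, hp, hleaf⟩ := hpeel B hB
    let S : Finset V := ((scope a).erase p)ᶜ
    have mem_S {i : V} (hi : i = r ∨ ∃ b ∈ B.erase a, i ∈ scope b) : i ∈ S := by
      simp only [S, Finset.mem_compl, Finset.mem_erase, not_and]
      intro hip hia
      obtain ⟨hir, hib⟩ := hleaf i hia hip
      obtain rfl | ⟨b, hb, hbi⟩ := hi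
      · exact hir rfl
      · exact hib b (Finset.mem_of_mem_erase hb) (Finset.ne_of_mem_erase hb) hbi
    have hrest : DependsOn (fun x => (∏ b ∈ B.erase a, w b x) * f x) S := fun x y hxy =>
      congrArg₂ (· * ·)
        (Finset.prod_congr rfl fun b hb => hw b fun i hi => hxy i (mem_S (.inr ⟨b, hb, hi⟩)))
        (hf fun i hi => hxy i (mem_S (.inl hi)))
    have hleaf_cond (x : ∀ i, α i) : prodCondExp π S (w a) x = prodExpect π (w a) := by
      rw [← hcond a p hp x]
      exact prodCondExp_congr_of_dependsOn (hw a) (by simp +contextual [S]) x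
    simp only [← Finset.mul_prod_erase B _ haB, mul_assoc]
    rw [prodExpect_mul_of_prodCondExp_eq hπ hrest hleaf_cond, ih _ (Finset.erase_ssubset haB)]

end ProductExpectation

namespace KSAT

variable {V A : Type} {Φ : KSAT V A} {k : ℕ} {h : V → A → ℝ} {u : A → V → ℝ}

section FactorGraph

lemma factorGraph_adj (Φ : KSAT V A) (i : V) (a : A) :
    Φ.factorGraph.Adj (Sum.inl i) (Sum.inr a) ↔ i ∈ Φ.scope a := by
  simp [factorGraph, SimpleGraph.fromRel_adj]

lemma isPeelable_scope_of_isAcyclic (hG : Φ.factorGraph.IsAcyclic)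
    (hne : ∀ a, (Φ.scope a).Nonempty) (r : V) : IsPeelable Φ.scope r := by
  intro B hB
  have : Nonempty (V ⊕ A) := ⟨Sum.inl r⟩
  obtain ⟨T, hT_ge, hT⟩ := exists_isTree_ge_of_isAcyclic hG
  have hadj {i : V} {a : A} (hi : i ∈ Φ.scope a) : T.Adj (Sum.inl i) (Sum.inr a) :=
    hT_ge ((factorGraph_adj Φ i a).2 hi)
  let depth (x : V ⊕ A) : ℕ := T.dist (Sum.inl r) x
  obtain ⟨a, haB, ha_max⟩ := B.exists_max_image (fun a => depth (Sum.inr a)) hB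
  obtain ⟨p, hp, hp_min⟩ := (Φ.scope a).exists_min_image (fun i => depth (Sum.inl i)) (hne a)
  have hdeeper {j : V} (hj : j ∈ Φ.scope a) (hjp : j ≠ p) :
      depth (Sum.inr a) < depth (Sum.inl j) := by
    by_contra! hle
    have hlt := lt_of_le_of_ne hle (hT.dist_ne_of_adj _ (hadj hj))
    exact hjp (Sum.inl_injective (eq_of_adj_of_dist_lt hT (hadj hj) (hadj hp) hlt
      ((hp_min j hj).trans_lt hlt)))
  refine ⟨a, haB, p, hp, fun j hj hjp => ⟨?_, fun b hb hba hjb => ?_⟩⟩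
  · rintro rfl
    simpa [depth] using hdeeper hj hjp
  · have hlt := dist_lt_dist_of_adj_of_ne hT (hadj hj).symm (hadj hjb)
      (fun hab => hba (Sum.inr_injective hab).symm) (hdeeper hj hjp)
    exact ((hdeeper hj hjp).trans hlt).not_ge (ha_max b hb)

/-- The dependencies `j→b`, `b→i`, `i→a` of the variable-to-clause messages under BP; the pair
`(i, a)` stands for the directed edge `i→a`. -/
def MessagePrecedes (Φ : KSAT V A) (e' e : V × A) : Prop :=
  e.1 ∈ Φ.scope e.2 ∧ e.1 ∈ Φ.scope e'.2 ∧ e'.1 ∈ Φ.scope e'.2 ∧ e'.1 ≠ e.1 ∧ e'.2 ≠ e.2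

lemma wellFounded_messagePrecedes [Finite V] [Finite A] (hG : Φ.factorGraph.IsAcyclic) :
    WellFounded Φ.MessagePrecedes := by
  obtain hempty | hnonempty := isEmpty_or_nonempty (V ⊕ A)
  · exact ⟨fun e => (hempty.false (Sum.inl e.1)).elim⟩
  obtain ⟨T, hT_ge, hT⟩ := exists_isTree_ge_of_isAcyclic hG
  have hadj {i : V} {a : A} (hi : i ∈ Φ.scope a) : T.Adj (Sum.inl i) (Sum.inr a) :=
    hT_ge ((factorGraph_adj Φ i a).2 hi)
  let side (e : V × A) : Set (V ⊕ A) := treeSide T (Sum.inl e.1) (Sum.inr e.2)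
  have side_mono : ∀ {e' e : V × A}, Φ.MessagePrecedes e' e → side e' ⊂ side e := by
    rintro ⟨j, b⟩ ⟨i, a⟩ ⟨hia, hib, hjb, hji, hba⟩
    exact (treeSide_ssubset hT (hadj hjb) (hadj hib).symm (Sum.inl_injective.ne hji)).trans
      (treeSide_ssubset hT (hadj hib).symm (hadj hia) (Sum.inr_injective.ne hba))
  exact Subrelation.wf side_mono (InvImage.wf side wellFounded_lt)

end FactorGraph

section Messages

lemma mem_nbr [Fintype A] {i : V} {a : A} : a ∈ Φ.nbr i ↔ i ∈ Φ.scope a := by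
  simp [nbr]

lemma bpUval_congr [DecidableEq V] {h h' : V → A → ℝ} {a : A} {i : V}
    (hh' : ∀ j ∈ (Φ.scope a).erase i, h j a = h' j a) : Φ.bpUval k h a i = Φ.bpUval k h' a i := by
  rw [bpUval, bpUval, Finset.prod_congr rfl fun j hj => by rw [hh' j hj]]

lemma exp_neg_two_mul_bpUval [DecidableEq V] {a : A} {i : V} (hk2 : 2 ≤ k)
    (hk : (Φ.scope a).card = k) (hia : i ∈ Φ.scope a) : Real.exp (-2 * Φ.bpUval k h a i) =
      1 - ∏ j ∈ (Φ.scope a).erase i, (1 - Real.tanh (h j a)) / 2 := by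
  have hcard : ((Φ.scope a).erase i).card = k - 1 := by rw [Finset.card_erase_of_mem hia, hk]
  have hlt : ∏ j ∈ (Φ.scope a).erase i, (1 - Real.tanh (h j a)) / 2 < 1 := by
    have hne : ((Φ.scope a).erase i).Nonempty := Finset.card_pos.1 (by omega)
    calc _ < ∏ _j ∈ (Φ.scope a).erase i, (1 : ℝ) :=
          Finset.prod_lt_prod_of_nonempty
            (fun j _ => by linarith [Real.tanh_lt_one (h j a)])
            (fun j _ => by linarith [Real.neg_one_lt_tanh (h j a)]) hne
      _ = 1 := Finset.prod_const_one
  rw [bpUval, ← hcard, ← Finset.prod_const, ← Finset.prod_div_distrib,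
    show ∀ t : ℝ, -2 * (-(1 / 2) * t) = t by intro t; ring, Real.exp_log (by linarith)]

lemma sum_agree_sub_sum_disag_congr [Fintype A] [DecidableEq A] {u u' : A → V → ℝ} {i : V} {a : A}
    (huu' : ∀ b, i ∈ Φ.scope b → b ≠ a → u b i = u' b i) :
    (∑ b ∈ Φ.agree i a, u b i) - ∑ b ∈ Φ.disag i a, u b i =
      (∑ b ∈ Φ.agree i a, u' b i) - ∑ b ∈ Φ.disag i a, u' b i := by
  have hmem {b : A} (hb : b ∈ (Φ.nbr i).erase a) : u b i = u' b i :=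
    huu' b (mem_nbr.1 (Finset.mem_of_mem_erase hb)) (Finset.ne_of_mem_erase hb)
  congr 1 <;> exact Finset.sum_congr rfl fun b hb => hmem (Finset.mem_of_mem_filter b hb)

variable [Fintype A] [DecidableEq V] [DecidableEq A]

/-- The BP map on variable-to-clause messages, with the clause-to-variable messages eliminated. -/
noncomputable def bpStep (Φ : KSAT V A) (k : ℕ) (h : V → A → ℝ) (i : V) (a : A) : ℝ :=
  (∑ b ∈ Φ.agree i a, Φ.bpUval k h b i) - ∑ b ∈ Φ.disag i a, Φ.bpUval k h b i

lemma bpStep_congr {h h' : V → A → ℝ} {i : V} {a : A} (hia : i ∈ Φ.scope a)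
    (hh' : ∀ j b, j ∈ Φ.scope b → Φ.MessagePrecedes (j, b) (i, a) → h j b = h' j b) :
    Φ.bpStep k h i a = Φ.bpStep k h' i a :=
  sum_agree_sub_sum_disag_congr fun b hib hba => bpUval_congr fun j hj =>
    have ⟨hji, hjb⟩ := Finset.mem_erase.1 hj
    hh' j b hjb ⟨hia, hib, hjb, hji, hba⟩

lemma IsBPFixedPoint.eq_bpStep (H : Φ.IsBPFixedPoint k h u) {i : V} {a : A}
    (hia : i ∈ Φ.scope a) : h i a = Φ.bpStep k h i a :=
  (H a i hia).1.trans (sum_agree_sub_sum_disag_congr fun b hib _ => (H b i hib).2)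

theorem exists_isBPFixedPoint [Finite V] (hG : Φ.factorGraph.IsAcyclic) (k : ℕ) :
    ∃ (h : V → A → ℝ) (u : A → V → ℝ), Φ.IsBPFixedPoint k h u := by
  obtain ⟨h, hh⟩ := exists_fixedPoint_of_wellFounded (S := {e : V × A | e.1 ∈ Φ.scope e.2})
    (F := fun (h : V × A → ℝ) e => Φ.bpStep k (Function.curry h) e.1 e.2)
    (wellFounded_messagePrecedes hG) fun _ he _ _ hagree => bpStep_congr he fun j b => hagree (j, b)
  exact ⟨Function.curry h, Φ.bpUval k (Function.curry h), fun a i hia => ⟨hh (i, a) hia, rfl⟩⟩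

theorem IsBPFixedPoint.unique [Finite V] (hG : Φ.factorGraph.IsAcyclic) {h' : V → A → ℝ}
    {u' : A → V → ℝ} (H : Φ.IsBPFixedPoint k h u) (H' : Φ.IsBPFixedPoint k h' u') {i : V} {a : A}
    (hia : i ∈ Φ.scope a) : h i a = h' i a ∧ u a i = u' a i := by
  have heq : ∀ i a, i ∈ Φ.scope a → h i a = h' i a := fun i a hia =>
    eqOn_of_fixedPoint_of_wellFounded (S := {e : V × A | e.1 ∈ Φ.scope e.2})
      (F := fun (h : V × A → ℝ) e => Φ.bpStep k (Function.curry h) e.1 e.2)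
      (f := Function.uncurry h) (g := Function.uncurry h') (wellFounded_messagePrecedes hG)
      (fun _ he _ _ hagree => bpStep_congr he fun j b => hagree (j, b))
      (fun _ he => H.eq_bpStep he) (fun _ he => H'.eq_bpStep he) (x := (i, a)) hia
  refine ⟨heq i a hia, ?_⟩
  rw [(H a i hia).2, (H' a i hia).2]
  exact bpUval_congr fun j hj => heq j a (Finset.mem_of_mem_erase hj)

end Messages

section Spin

/-- The value `v` of a variable as a sign relative to a clause it violates at `c`: `-1` if `v`
violates, `+1` if it satisfies. For `c = 1` this is the spin `(-1) ^ v`. -/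
def litSign (c v : Bool) : ℝ := if v = c then -1 else 1

lemma field_mul_litSign [Fintype A] (Φ : KSAT V A) (u : A → V → ℝ) (i : V) (v : Bool) :
    Φ.field u i * litSign true v = ∑ b ∈ Φ.nbr i, u b i * litSign (Φ.z b i) v := by
  rw [field, nbrPos, nbrNeg, Finset.sum_filter, Finset.sum_filter, ← Finset.sum_sub_distrib,
    Finset.sum_mul]
  refine Finset.sum_congr rfl fun b _ => ?_
  cases Φ.z b i <;> cases v <;> simp [litSign]

lemma IsBPFixedPoint.field_mul_litSign_eq_add [Fintype A] [DecidableEq V] [DecidableEq A]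
    (H : Φ.IsBPFixedPoint k h u) {i : V} {a : A} (hia : i ∈ Φ.scope a) (v : Bool) :
    Φ.field u i * litSign true v =
      h i a * litSign (Φ.z a i) v + u a i * litSign (Φ.z a i) v := by
  rw [field_mul_litSign, ← Finset.sum_erase_add _ _ (mem_nbr.2 hia), (H a i hia).1, agree, disag,
    Finset.sum_filter, Finset.sum_filter, ← Finset.sum_sub_distrib, Finset.sum_mul]
  congr 1
  refine Finset.sum_congr rfl fun b _ => ?_
  cases Φ.z b i <;> cases Φ.z a i <;> cases v <;> simp [litSign]

lemma bpMarginal_eq_exp_div_cosh [Fintype A] (Φ : KSAT V A) (u : A → V → ℝ) (i : V) (v : Bool) :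
    Φ.bpMarginal u i v =
      Real.exp (Φ.field u i * litSign true v) / (2 * Real.cosh (Φ.field u i)) := by
  have hcosh := (Real.cosh_pos (Φ.field u i)).ne'
  cases v <;> simp only [bpMarginal, litSign, Real.tanh_eq_sinh_div_cosh, if_true,
    if_false, Bool.false_eq_true, mul_one, mul_neg]
  · rw [← Real.cosh_add_sinh]
    field_simp
  · rw [← Real.cosh_sub_sinh]
    field_simp

lemma sum_bpMarginal [Fintype A] (Φ : KSAT V A) (u : A → V → ℝ) (i : V) :
    ∑ v, Φ.bpMarginal u i v = 1 := by
  simp only [Fintype.sum_bool, bpMarginal, if_true, Bool.false_eq_true, if_false]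
  ring

variable [Fintype A] [DecidableEq V] [DecidableEq A]

lemma IsBPFixedPoint.bpMarginal_mul_exp (H : Φ.IsBPFixedPoint k h u) {i : V} {a : A}
    (hia : i ∈ Φ.scope a) (v : Bool) :
    Φ.bpMarginal u i v * Real.exp (-(u a i * litSign (Φ.z a i) v)) =
      Real.exp (h i a * litSign (Φ.z a i) v) / (2 * Real.cosh (Φ.field u i)) := by
  rw [bpMarginal_eq_exp_div_cosh, H.field_mul_litSign_eq_add hia, div_mul_eq_mul_div,
    ← Real.exp_add, add_neg_cancel_right]

lemma IsBPFixedPoint.sum_bpMarginal_mul_exp (H : Φ.IsBPFixedPoint k h u) {i : V} {a : A}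
    (hia : i ∈ Φ.scope a) :
    ∑ v, Φ.bpMarginal u i v * Real.exp (-(u a i * litSign (Φ.z a i) v)) =
      Real.cosh (h i a) / Real.cosh (Φ.field u i) := by
  simp only [H.bpMarginal_mul_exp hia, Fintype.sum_bool, Real.cosh_eq (h i a)]
  cases Φ.z a i <;>
    simp only [litSign, if_true, if_false, reduceCtorEq, mul_one, mul_neg_one] <;> ring

lemma IsBPFixedPoint.sum_bpMarginal_mul_violated (H : Φ.IsBPFixedPoint k h u) {i : V} {a : A}
    (hia : i ∈ Φ.scope a) :
    ∑ v, Φ.bpMarginal u i v *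
        ((if v = Φ.z a i then 1 else 0) * Real.exp (-(u a i * litSign (Φ.z a i) v))) =
      Real.cosh (h i a) / Real.cosh (Φ.field u i) * ((1 - Real.tanh (h i a)) / 2) := by
  have hcosh := (Real.cosh_pos (h i a)).ne'
  simp only [ite_mul, one_mul, zero_mul, mul_ite, mul_zero, Finset.sum_ite_eq', Finset.mem_univ,
    if_true]
  rw [H.bpMarginal_mul_exp hia, litSign, if_pos rfl, mul_neg_one, ← Real.cosh_sub_sinh,
    Real.tanh_eq_sinh_div_cosh]
  field_simp

end Spin

section ClauseWeight

/-- The weight `w_a` of clause `a`: its satisfaction indicator, divided by the factors that the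
messages from `a` contribute to the BP marginals. -/
noncomputable def clauseWeight (Φ : KSAT V A) (u : A → V → ℝ) (a : A) (x : V → Bool) : ℝ :=
  if Φ.Satisfies x a then ∏ i ∈ Φ.scope a, Real.exp (-(u a i * litSign (Φ.z a i) (x i))) else 0

lemma dependsOn_clauseWeight (Φ : KSAT V A) (u : A → V → ℝ) (a : A) :
    DependsOn (Φ.clauseWeight u a) (Φ.scope a) := by
  intro x y hxy
  have hsat : Φ.Satisfies x a ↔ Φ.Satisfies y a :=
    exists_congr fun i => and_congr_right fun hi => by rw [hxy i hi]
  simp only [clauseWeight, hsat]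
  rw [Finset.prod_congr rfl fun i hi => by rw [hxy i hi]]

lemma clauseWeight_eq_sub (Φ : KSAT V A) (u : A → V → ℝ) (a : A) (x : V → Bool) :
    Φ.clauseWeight u a x = (∏ i ∈ Φ.scope a, Real.exp (-(u a i * litSign (Φ.z a i) (x i)))) -
      ∏ i ∈ Φ.scope a, ((if x i = Φ.z a i then 1 else 0) *
        Real.exp (-(u a i * litSign (Φ.z a i) (x i)))) := by
  rw [clauseWeight, Finset.prod_mul_distrib]
  split_ifs with hsat
  · obtain ⟨i, hi, hx⟩ := hsat
    have hzero : ∏ i ∈ Φ.scope a, (if x i = Φ.z a i then (1 : ℝ) else 0) = 0 :=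
      Finset.prod_eq_zero hi (if_neg hx)
    rw [hzero, zero_mul, sub_zero]
  · have hviolated : ∀ i ∈ Φ.scope a, x i = Φ.z a i := by simpa [Satisfies] using hsat
    rw [Finset.prod_eq_one fun i hi => if_pos (hviolated i hi), one_mul, sub_self]

variable [Fintype V] [Fintype A]

lemma prod_clauseWeight_mul_prod_exp (Φ : KSAT V A) (u : A → V → ℝ) (x : V → Bool) :
    (∏ a, Φ.clauseWeight u a x) * ∏ i, Real.exp (Φ.field u i * litSign true (x i)) =
      if Φ.IsSolution x then 1 else 0 := by
  have hexchange : ∏ i, Real.exp (Φ.field u i * litSign true (x i)) =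
      ∏ a, ∏ i ∈ Φ.scope a, Real.exp (u a i * litSign (Φ.z a i) (x i)) := by
    simp only [field_mul_litSign, Real.exp_sum]
    exact Finset.prod_comm' (by simp [nbr])
  have hcancel (a : A) : Φ.clauseWeight u a x *
      ∏ i ∈ Φ.scope a, Real.exp (u a i * litSign (Φ.z a i) (x i)) =
        if Φ.Satisfies x a then 1 else 0 := by
    rw [clauseWeight, ite_mul, zero_mul, ← Finset.prod_mul_distrib]
    simp [← Real.exp_add]
  rw [hexchange, ← Finset.prod_mul_distrib, Finset.prod_congr rfl fun a _ => hcancel a]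
  by_cases hs : Φ.IsSolution x
  · rw [if_pos hs, Finset.prod_eq_one fun a _ => if_pos (hs a)]
  · obtain ⟨a, ha⟩ := not_forall.1 hs
    rw [if_neg hs, Finset.prod_eq_zero (Finset.mem_univ a) (if_neg ha)]

variable [DecidableEq V]

lemma prodCondExp_clauseWeight_eq_sub (Φ : KSAT V A) (u : A → V → ℝ) {a : A} {p : V}
    (hp : p ∈ Φ.scope a) (x : V → Bool) :
    prodCondExp (Φ.bpMarginal u) {p} (Φ.clauseWeight u a) x =
      Real.exp (-(u a p * litSign (Φ.z a p) (x p))) *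
        (∏ j ∈ (Φ.scope a).erase p,
          ∑ v, Φ.bpMarginal u j v * Real.exp (-(u a j * litSign (Φ.z a j) v))) -
      (if x p = Φ.z a p then 1 else 0) * Real.exp (-(u a p * litSign (Φ.z a p) (x p))) *
        ∏ j ∈ (Φ.scope a).erase p, ∑ v, Φ.bpMarginal u j v *
          ((if v = Φ.z a j then 1 else 0) * Real.exp (-(u a j * litSign (Φ.z a j) v))) := by
  rw [funext (clauseWeight_eq_sub Φ u a), prodCondExp_sub,
    prodCondExp_singleton_prod (sum_bpMarginal Φ u) hp
      fun j v => Real.exp (-(u a j * litSign (Φ.z a j) v)),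
    prodCondExp_singleton_prod (sum_bpMarginal Φ u) hp
      fun j v => (if v = Φ.z a j then 1 else 0) * Real.exp (-(u a j * litSign (Φ.z a j) v))]

lemma IsBPFixedPoint.prodCondExp_clauseWeight [DecidableEq A] (hk2 : 2 ≤ k)
    (H : Φ.IsBPFixedPoint k h u) {a : A} (hk : (Φ.scope a).card = k) {p : V}
    (hp : p ∈ Φ.scope a) (x : V → Bool) :
    prodCondExp (Φ.bpMarginal u) {p} (Φ.clauseWeight u a) x =
      (∏ j ∈ (Φ.scope a).erase p, Real.cosh (h j a) / Real.cosh (Φ.field u j)) *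
        Real.exp (-(u a p)) := by
  have hu : ∏ j ∈ (Φ.scope a).erase p, (1 - Real.tanh (h j a)) / 2 =
      1 - Real.exp (-2 * u a p) := by
    rw [(H a p hp).2, exp_neg_two_mul_bpUval hk2 hk hp, sub_sub_cancel]
  have hmem {j : V} (hj : j ∈ (Φ.scope a).erase p) := Finset.mem_of_mem_erase hj
  rw [prodCondExp_clauseWeight_eq_sub Φ u hp,
    Finset.prod_congr rfl fun j hj => H.sum_bpMarginal_mul_exp (hmem hj),
    Finset.prod_congr rfl fun j hj => H.sum_bpMarginal_mul_violated (hmem hj),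
    Finset.prod_mul_distrib, hu]
  by_cases hx : x p = Φ.z a p
  · have hexp : Real.exp (u a p) * Real.exp (-2 * u a p) = Real.exp (-(u a p)) := by
      rw [← Real.exp_add]
      ring_nf
    simp only [litSign, hx, if_true, mul_neg, mul_one, neg_neg, one_mul]
    linear_combination
      (∏ j ∈ (Φ.scope a).erase p, Real.cosh (h j a) / Real.cosh (Φ.field u j)) * hexp
  · simp [litSign, hx, mul_comm]

lemma prodExpect_prod_clauseWeight_mul (Φ : KSAT V A) (u : A → V → ℝ) (f : (V → Bool) → ℝ) :
    prodExpect (Φ.bpMarginal u) (fun x => (∏ a, Φ.clauseWeight u a x) * f x) =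
      (∏ i, (2 * Real.cosh (Φ.field u i)))⁻¹ * ∑ x ∈ Φ.solutions, f x := by
  rw [solutions, Finset.sum_filter, Finset.mul_sum, prodExpect]
  refine Finset.sum_congr rfl fun x _ => ?_
  have hmass := prod_clauseWeight_mul_prod_exp Φ u x
  simp only [bpMarginal_eq_exp_div_cosh, div_eq_inv_mul]
  rw [Finset.prod_mul_distrib, Finset.prod_inv_distrib]
  by_cases hs : Φ.IsSolution x <;>
    simp only [hs, if_true, if_false] at hmass ⊢ <;>
    linear_combination (∏ i, (2 * Real.cosh (Φ.field u i)))⁻¹ * f x * hmass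

lemma IsBPFixedPoint.prodExpect_prod_clauseWeight_mul_apply [DecidableEq A] (hk2 : 2 ≤ k)
    (hk : ∀ a : A, (Φ.scope a).card = k) (hG : Φ.factorGraph.IsAcyclic)
    (H : Φ.IsBPFixedPoint k h u) (r : V) (g : Bool → ℝ) :
    prodExpect (Φ.bpMarginal u) (fun x => (∏ a, Φ.clauseWeight u a x) * g (x r)) =
      (∏ a, prodExpect (Φ.bpMarginal u) (Φ.clauseWeight u a)) *
        ∑ v, Φ.bpMarginal u r v * g v := by
  have hne (a : A) : (Φ.scope a).Nonempty := Finset.card_pos.1 (by rw [hk a]; omega)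
  have hcond (a : A) (p : V) (hp : p ∈ Φ.scope a) (x : V → Bool) :
      prodCondExp (Φ.bpMarginal u) {p} (Φ.clauseWeight u a) x =
        prodExpect (Φ.bpMarginal u) (Φ.clauseWeight u a) := by
    have hconst := H.prodCondExp_clauseWeight hk2 (hk a) hp
    rw [hconst x, prodExpect_eq_of_prodCondExp_eq (sum_bpMarginal Φ u) hconst]
  have hg : DependsOn (fun x : V → Bool => g (x r)) {r} := fun x y hxy =>
    congrArg g (hxy r rfl)
  rw [prodExpect_prod_mul_of_isPeelable (sum_bpMarginal Φ u)
    (isPeelable_scope_of_isAcyclic hG hne r) (dependsOn_clauseWeight Φ u) hcond hg,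
    prodExpect_apply (sum_bpMarginal Φ u)]

theorem IsBPFixedPoint.card_filter_solutions [DecidableEq A] (hk2 : 2 ≤ k)
    (hk : ∀ a : A, (Φ.scope a).card = k) (hG : Φ.factorGraph.IsAcyclic)
    (H : Φ.IsBPFixedPoint k h u) (r : V) (v : Bool) :
    ((Φ.solutions.filter fun x => x r = v).card : ℝ) =
      Φ.bpMarginal u r v * Φ.solutions.card := by
  have hcosh : (∏ i, (2 * Real.cosh (Φ.field u i)))⁻¹ ≠ 0 :=
    inv_ne_zero (Finset.prod_ne_zero_iff.2 fun i _ => by positivity)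
  have hweighted (g : Bool → ℝ) :=
    (prodExpect_prod_clauseWeight_mul Φ u fun x => g (x r)).symm.trans
      (H.prodExpect_prod_clauseWeight_mul_apply hk2 hk hG r g)
  have htotal := hweighted fun _ => 1
  have hmarginal := hweighted fun v' => if v' = v then 1 else 0
  simp only [Finset.sum_const, nsmul_eq_mul, mul_one, sum_bpMarginal] at htotal
  simp only [Finset.sum_boole, mul_boole, Finset.sum_ite_eq', Finset.mem_univ, if_true]
    at hmarginal
  refine mul_left_cancel₀ hcosh ?_
  linear_combination hmarginal - Φ.bpMarginal u r v * htotal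

end ClauseWeight

end KSAT

theorem bp_exact_on_trees_general
    {V A : Type} [Fintype V] [Fintype A] [DecidableEq V] [DecidableEq A]
    (k : ℕ) (hk2 : 2 ≤ k) (Φ : KSAT V A) (hk : ∀ a : A, (Φ.scope a).card = k)
    (hforest : Φ.factorGraph.IsAcyclic) (hsat : (Φ.solutions).Nonempty) :
    (∃ (h : V → A → ℝ) (u : A → V → ℝ), Φ.IsBPFixedPoint k h u) ∧
    (∀ (h h' : V → A → ℝ) (u u' : A → V → ℝ),
      Φ.IsBPFixedPoint k h u → Φ.IsBPFixedPoint k h' u' →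
      ∀ a : A, ∀ i ∈ Φ.scope a, h i a = h' i a ∧ u a i = u' a i) ∧
    (∀ (h : V → A → ℝ) (u : A → V → ℝ), Φ.IsBPFixedPoint k h u →
      ∀ (i : V) (v : Bool),
        Φ.bpMarginal u i v =
          ((Φ.solutions.filter fun y => y i = v).card : ℝ) / (Φ.solutions.card : ℝ)) := by
  have hcard : (Φ.solutions.card : ℝ) ≠ 0 := Nat.cast_ne_zero.2 hsat.card_pos.ne'
  refine ⟨KSAT.exists_isBPFixedPoint hforest k, ?_, fun h u H i v => ?_⟩
  · exact fun h h' u u' H H' a i hia => H.unique hforest H' hia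
  · rw [eq_div_iff hcard, H.card_filter_solutions hk2 hk hforest]

/-- on a tree factor graph with a nonempty solution set, the BP
fixed point equations have a unique solution (the messages on the directed
edges are uniquely determined), and the BP marginals computed from it are the
true marginals of the uniform measure over solutions. -/
theorem bp_exact_on_trees
    {V A : Type} [Fintype V] [Fintype A] [DecidableEq V] [DecidableEq A]
    (k : ℕ) (hk2 : 2 ≤ k) (Φ : KSAT V A) (hk : ∀ a : A, (Φ.scope a).card = k)
    (htree : Φ.factorGraph.IsTree) (hsat : (Φ.solutions).Nonempty) :
    (∃ (h : V → A → ℝ) (u : A → V → ℝ), Φ.IsBPFixedPoint k h u) ∧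
    (∀ (h h' : V → A → ℝ) (u u' : A → V → ℝ),
      Φ.IsBPFixedPoint k h u → Φ.IsBPFixedPoint k h' u' →
      ∀ a : A, ∀ i ∈ Φ.scope a, h i a = h' i a ∧ u a i = u' a i) ∧
    (∀ (h : V → A → ℝ) (u : A → V → ℝ), Φ.IsBPFixedPoint k h u →
      ∀ (i : V) (v : Bool),
        Φ.bpMarginal u i v =
          ((Φ.solutions.filter fun y => y i = v).card : ℝ) / (Φ.solutions.card : ℝ)) := by
  exact bp_exact_on_trees_general k hk2 Φ hk htree.isAcyclic hsat
end

section
/- Let F be a k-SAT formula with k≥2 whose factor graph is a tree, μ the uniform distribution over its solutions, and {h_{i→a},u_{a→i}} the unique BP fixed point. Let a∈F, i∈∂a, and v∈{0,1} with v≠z(i,a) and μ(x_i=v)>0. Then the conditional probability under μ, given x_i=v, that x_j=z(j,a) for every j∈∂a∖{i} equals ∏_{j∈∂a∖{i}} (1−tanh h_{j→a})/2. -/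
open scoped Classical

/-!
Put `q j a = (1 - tanh h_{j→a}) / 2`, the probability in the cavity at `a` that `j` does not satisfy
`a`, and `w a i = exp (-2 u_{a→i})`. The BP equations become the polynomial identities
`w a i = 1 - ∏ q j a` and `(1 - q i a) ∏_{∂₊} w b i = q i a ∏_{∂₋} w b i`.

Root the factor graph at `i`. The second identity says that, with all clauses other than `b`
replaced by messages (the factor `w c j` when `c` has parent `j` and `j` does not satisfy `c`),
flipping a child `j` of `b` changes the total weight in the ratio `1 - q j b : q j b`; so summing
out the children of `b`, they all fail to satisfy `b` with weight `∏ q j b`. By the first identity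
the constraint of `b` may then itself be replaced by its message. Eliminating all clauses but `a`
in this way, deepest first, leaves only messages, and one more summation over the children of `a`
gives the product.
-/

section FlippingCoordinates

variable {ι R : Type*} [Fintype ι] [DecidableEq ι] [CommRing R]

lemma sum_filter_update_not (W : (ι → Bool) → R) (j : ι) (b : Bool) :
    ∑ x with x j = b, W (Function.update x j !b) = ∑ x with ¬x j = b, W x := by
  refine Finset.sum_nbij' (Function.update · j !b) (Function.update · j b) ?_ ?_ ?_ ?_ ?_
  all_goals grind [Function.update_self, Function.update_idem, Function.update_eq_self]

lemma sum_filter_eq_mul_sum_of_update_not {W : (ι → Bool) → R} {j : ι} {b : Bool} {q : R}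
    (hW : ∀ x, x j = b → (1 - q) * W x = q * W (Function.update x j !b)) :
    ∑ x with x j = b, W x = q * ∑ x, W x := by
  have flip : (1 - q) * ∑ x with x j = b, W x = q * ∑ x with ¬x j = b, W x := by
    rw [← sum_filter_update_not, Finset.mul_sum, Finset.mul_sum]
    exact Finset.sum_congr rfl fun x hx ↦ hW x (Finset.mem_filter.1 hx).2
  rw [← Finset.sum_filter_add_sum_filter_not Finset.univ (fun x ↦ x j = b) W]
  linear_combination flip

lemma sum_filter_forall_eq_prod_mul_sum {z : ι → Bool} {q : ι → R} {L : Finset ι}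
    {W : (ι → Bool) → R}
    (hW : ∀ j ∈ L, ∀ x, x j = z j → (1 - q j) * W x = q j * W (Function.update x j !z j)) :
    ∑ x with ∀ j ∈ L, x j = z j, W x = (∏ j ∈ L, q j) * ∑ x, W x := by
  induction L using Finset.induction_on generalizing W with
  | empty => simp
  | insert i L hi ih =>
    have restrict : ∀ j ∈ L, ∀ x, x j = z j →
        (1 - q j) * (if x i = z i then W x else 0) = q j *
          (if Function.update x j (!z j) i = z i then W (Function.update x j !z j) else 0) := by
      intro j hj x hx
      have hij : i ≠ j := fun e ↦ hi (e ▸ hj)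
      rw [Function.update_of_ne hij, mul_ite, mul_ite, hW j (Finset.mem_insert_of_mem hj) x hx,
        mul_zero, mul_zero]
    calc ∑ x with ∀ j ∈ insert i L, x j = z j, W x
        = ∑ x with ∀ j ∈ L, x j = z j, if x i = z i then W x else 0 := by
          rw [← Finset.sum_filter, Finset.filter_filter]
          simp only [Finset.forall_mem_insert, and_comm]
      _ = (∏ j ∈ L, q j) * ∑ x with x i = z i, W x := by rw [ih restrict, Finset.sum_filter]
      _ = (∏ j ∈ insert i L, q j) * ∑ x, W x := by
          rw [sum_filter_eq_mul_sum_of_update_not (hW i (Finset.mem_insert_self i L)),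
            Finset.prod_insert hi]
          ring

end FlippingCoordinates

section TreeDistance

variable {X : Type*} {G : SimpleGraph X}

lemma eq_of_adj_of_dist_add_one_eq (hG : G.IsTree) {r v w₁ w₂ : X} (h₁ : G.Adj w₁ v)
    (h₂ : G.Adj w₂ v) (d₁ : G.dist r w₁ + 1 = G.dist r v) (d₂ : G.dist r w₂ + 1 = G.dist r v) :
    w₁ = w₂ := by
  obtain ⟨p₁, hp₁⟩ := hG.connected.exists_walk_length_eq_dist r w₁
  obtain ⟨p₂, hp₂⟩ := hG.connected.exists_walk_length_eq_dist r w₂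
  have path₁ : (p₁.concat h₁).IsPath := SimpleGraph.Walk.isPath_of_length_eq_dist _ (by simp; lia)
  have path₂ : (p₂.concat h₂).IsPath := SimpleGraph.Walk.isPath_of_length_eq_dist _ (by simp; lia)
  have same_path := (hG.existsUnique_path r v).unique path₁ path₂
  simpa using congrArg SimpleGraph.Walk.penultimate same_path

lemma dist_eq_dist_add_one_or_of_adj_of_ne (hG : G.IsTree) (r : X) {v w₁ w₂ : X}
    (h₁ : G.Adj w₁ v) (h₂ : G.Adj w₂ v) (hne : w₁ ≠ w₂) :
    G.dist r w₁ = G.dist r v + 1 ∨ G.dist r w₂ = G.dist r v + 1 := by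
  rcases hG.dist_eq_dist_add_one_of_adj r h₁ with d₁ | d₁
  · exact .inl d₁
  rcases hG.dist_eq_dist_add_one_of_adj r h₂ with d₂ | d₂
  · exact .inr d₂
  exact absurd (eq_of_adj_of_dist_add_one_eq hG h₁ h₂ d₁.symm d₂.symm) hne

end TreeDistance

lemma one_add_tanh_eq_mul_exp (t : ℝ) :
    1 + Real.tanh t = (1 - Real.tanh t) * Real.exp (2 * t) := by
  have hcosh := (Real.cosh_pos t).ne'
  rw [Real.tanh_eq_sinh_div_cosh, two_mul, Real.exp_add]
  field_simp
  rw [Real.cosh_add_sinh, Real.cosh_sub_sinh, sq, ← mul_assoc, ← Real.exp_add]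
  simp

namespace KSAT

variable {V A : Type} {Φ : KSAT V A}

lemma factorGraph_adj_inl_inr {j : V} {c : A} :
    Φ.factorGraph.Adj (Sum.inl j) (Sum.inr c) ↔ j ∈ Φ.scope c := by
  simp [factorGraph]

lemma satisfies_dependsOn_scope (c : A) : DependsOn (Φ.Satisfies · c) (Φ.scope c : Set V) := by
  intro x y hxy
  have : ∀ j ∈ Φ.scope c, (x j ≠ Φ.z c j ↔ y j ≠ Φ.z c j) := fun j hj ↦ by rw [hxy j hj]
  exact propext <| exists_congr fun j ↦ and_congr_right <| this j

lemma dependsOn_ite_forall_satisfies {R : Type*} [Zero R] {φ : (V → Bool) → R} {t : Set V}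
    {S : Finset A} [DecidablePred fun x : V → Bool ↦ ∀ c ∈ S, Φ.Satisfies x c]
    (hφ : DependsOn φ t) (hS : ∀ c ∈ S, (Φ.scope c : Set V) ⊆ t) :
    DependsOn (fun x ↦ if ∀ c ∈ S, Φ.Satisfies x c then φ x else 0) t := by
  intro x y hxy
  have satisfies_iff : (∀ c ∈ S, Φ.Satisfies x c) ↔ ∀ c ∈ S, Φ.Satisfies y c :=
    forall₂_congr fun c hc ↦ ((satisfies_dependsOn_scope c).mono (hS c hc) hxy).to_iff
  simp only [satisfies_iff, hφ hxy]

/-- An orientation of the formula away from one of the variables of `a`: every clause has a parent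
variable, its other variables are its children, and `depth` increases from a clause to the other
clauses containing one of its children. On a factor graph rooted at a variable `i` of `a`, the
parent of `c` is the neighbour of `c` closest to `i` and `depth c` is the distance from `i` to `c`.
-/
structure Rooting (Φ : KSAT V A) (a : A) where
  parent : A → V
  depth : A → ℕ
  parent_mem : ∀ c, parent c ∈ Φ.scope c
  depth_root_le : ∀ c, depth a ≤ depth c
  parent_eq_of_child : ∀ {b c : A} {j : V}, c ≠ b → j ∈ Φ.scope b → j ≠ parent b →
    j ∈ Φ.scope c → parent c = j
  depth_lt_of_child : ∀ {b c : A} {j : V}, c ≠ b → j ∈ Φ.scope b → j ≠ parent b →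
    j ∈ Φ.scope c → depth b < depth c

lemma exists_parent {T : SimpleGraph (V ⊕ A)} (hT : T.IsTree) (hΦT : Φ.factorGraph ≤ T)
    (r : V ⊕ A) {b : A} (hb : (Φ.scope b).Nonempty) :
    ∃ p ∈ Φ.scope b, ∀ j ∈ Φ.scope b, j ≠ p →
      T.dist r (Sum.inl j) = T.dist r (Sum.inr b) + 1 := by
  have hadj {j : V} (hj : j ∈ Φ.scope b) : T.Adj (Sum.inl j) (Sum.inr b) :=
    hΦT (factorGraph_adj_inl_inr.2 hj)
  by_cases hclose : ∃ p ∈ Φ.scope b, T.dist r (Sum.inl p) ≠ T.dist r (Sum.inr b) + 1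
  · obtain ⟨p, hp, hdist⟩ := hclose
    refine ⟨p, hp, fun j hj hjp ↦ ?_⟩
    exact (dist_eq_dist_add_one_or_of_adj_of_ne hT r (hadj hj) (hadj hp)
      (Sum.inl_injective.ne hjp)).resolve_right hdist
  · push Not at hclose
    obtain ⟨p, hp⟩ := hb
    exact ⟨p, hp, fun j hj _ ↦ hclose j hj⟩

lemma exists_rooting (hΦ : Φ.factorGraph.IsAcyclic) (hne : ∀ b, (Φ.scope b).Nonempty)
    {a : A} {i : V} (hia : i ∈ Φ.scope a) : ∃ ρ : Φ.Rooting a, ρ.parent a = i := by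
  have : Nonempty (V ⊕ A) := ⟨Sum.inr a⟩
  -- Distances in a spanning tree root all the components of the factor graph at once.
  obtain ⟨T, hΦT, -, hT⟩ :=
    SimpleGraph.connected_top.exists_isTree_le_of_le_of_isAcyclic le_top hΦ
  have hadj {j : V} {c : A} (hj : j ∈ Φ.scope c) : T.Adj (Sum.inl j) (Sum.inr c) :=
    hΦT (factorGraph_adj_inl_inr.2 hj)
  choose parent parent_mem dist_child using fun b ↦ exists_parent hT hΦT (Sum.inl i) (hne b)
  have parent_eq_and_lt {b c : A} {j : V} (hcb : c ≠ b) (hjb : j ∈ Φ.scope b)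
      (hj : j ≠ parent b) (hjc : j ∈ Φ.scope c) :
      parent c = j ∧ T.dist (Sum.inl i) (Sum.inr b) < T.dist (Sum.inl i) (Sum.inr c) := by
    have hb := dist_child b j hjb hj
    have hc := dist_eq_dist_add_one_or_of_adj_of_ne hT (Sum.inl i) (hadj hjc).symm
      (hadj hjb).symm (Sum.inr_injective.ne hcb)
    refine ⟨by_contra fun hjp ↦ ?_, by lia⟩
    have := dist_child c j hjc (Ne.symm hjp)
    lia
  refine ⟨⟨parent, fun c ↦ T.dist (Sum.inl i) (Sum.inr c), parent_mem, fun c ↦ ?_,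
    fun hcb hjb hj hjc ↦ (parent_eq_and_lt hcb hjb hj hjc).1,
    fun hcb hjb hj hjc ↦ (parent_eq_and_lt hcb hjb hj hjc).2⟩, by_contra fun hia' ↦ ?_⟩
  · rw [SimpleGraph.dist_eq_one_iff_adj.2 (hadj hia)]
    exact hT.connected.pos_dist_of_ne Sum.inl_ne_inr
  · simpa using dist_child a i hia (Ne.symm hia')

section SumProduct

variable {R : Type*} [CommRing R]

/-- The BP equations in probability form: `q i a` is the probability, in the cavity at `a`, that
`i` does not satisfy `a`, and `w a i` is the probability that `a` is satisfied given that `i` does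
not satisfy it. The quotient defining `q i a` is cleared of its denominator. -/
structure IsSumProductFixedPoint [Fintype A] [DecidableEq V] [DecidableEq A] (Φ : KSAT V A)
    (q : V → A → R) (w : A → V → R) : Prop where
  clause_eq : ∀ a, ∀ i ∈ Φ.scope a, w a i = 1 - ∏ j ∈ (Φ.scope a).erase i, q j a
  variable_eq : ∀ a, ∀ i ∈ Φ.scope a,
    (1 - q i a) * ∏ b ∈ Φ.agree i a, w b i = q i a * ∏ b ∈ Φ.disag i a, w b i

namespace Rooting

variable {a : A} [DecidableEq V]

/-- The variables of the clause `b` other than its parent. -/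
def children (ρ : Φ.Rooting a) (b : A) : Finset V :=
  (Φ.scope b).erase (ρ.parent b)

lemma mem_children (ρ : Φ.Rooting a) {b : A} {j : V} :
    j ∈ ρ.children b ↔ j ≠ ρ.parent b ∧ j ∈ Φ.scope b :=
  Finset.mem_erase

lemma scope_subset_compl_children (ρ : Φ.Rooting a) {b c : A} (hcb : c ≠ b)
    (hle : ρ.depth c ≤ ρ.depth b) : (Φ.scope c : Set V) ⊆ (ρ.children b : Set V)ᶜ := by
  intro j hjc hj
  obtain ⟨hjp, hjb⟩ := ρ.mem_children.1 hj
  exact (ρ.depth_lt_of_child hcb hjb hjp hjc).not_ge hle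

/-- The message `w` of the clause `c` to its parent, as a function of the assignment: it stands for
the subformula hanging from the parent through `c`. -/
def message (ρ : Φ.Rooting a) (w : A → V → R) (c : A) (x : V → Bool) : R :=
  if x (ρ.parent c) = Φ.z c (ρ.parent c) then w c (ρ.parent c) else 1

variable {ρ : Φ.Rooting a} {q : V → A → R} {w : A → V → R} {b : A} {T : Finset A}

lemma not_satisfies_iff {x : V → Bool} : ¬Φ.Satisfies x b ↔
    x (ρ.parent b) = Φ.z b (ρ.parent b) ∧ ∀ j ∈ ρ.children b, x j = Φ.z b j := by
  rw [← Finset.forall_mem_insert (p := fun j ↦ x j = Φ.z b j), children,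
    Finset.insert_erase (ρ.parent_mem b)]
  simp [Satisfies]

lemma message_update_of_notMem_scope {c : A} {j : V} (hj : j ∉ Φ.scope c) (x : V → Bool)
    (v : Bool) : ρ.message w c (Function.update x j v) = ρ.message w c x := by
  have hne : ρ.parent c ≠ j := fun e ↦ hj (e ▸ ρ.parent_mem c)
  simp only [message, Function.update_of_ne hne]

variable [Fintype A] [DecidableEq A]

lemma prod_message_nbr_erase {j : V} (hj : j ∈ ρ.children b) (x : V → Bool) :
    ∏ c ∈ (Φ.nbr j).erase b, ρ.message w c x =
      ∏ c ∈ (Φ.nbr j).erase b with Φ.z c j = x j, w c j := by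
  rw [Finset.prod_filter]
  refine Finset.prod_congr rfl fun c hc ↦ ?_
  obtain ⟨hjp, hjb⟩ := ρ.mem_children.1 hj
  obtain ⟨hcb, hjc⟩ : c ≠ b ∧ j ∈ Φ.scope c := by simpa [nbr] using hc
  simp only [message, ρ.parent_eq_of_child hcb hjb hjp hjc, eq_comm]

lemma one_sub_mul_prod_message (hqw : Φ.IsSumProductFixedPoint q w) (hbT : b ∉ T)
    (hT : ∀ c, ρ.depth b < ρ.depth c → c ∈ T) {j : V} (hj : j ∈ ρ.children b)
    {x : V → Bool} (hx : x j = Φ.z b j) :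
    (1 - q j b) * ∏ c ∈ T, ρ.message w c x =
      q j b * ∏ c ∈ T, ρ.message w c (Function.update x j !Φ.z b j) := by
  obtain ⟨hjp, hjb⟩ := ρ.mem_children.1 hj
  have nbr_subset : (Φ.nbr j).erase b ⊆ T := by
    intro c hc
    obtain ⟨hcb, hjc⟩ : c ≠ b ∧ j ∈ Φ.scope c := by simpa [nbr] using hc
    exact hT c (ρ.depth_lt_of_child hcb hjb hjp hjc)
  have far : ∏ c ∈ T \ (Φ.nbr j).erase b, ρ.message w c (Function.update x j !Φ.z b j) =
      ∏ c ∈ T \ (Φ.nbr j).erase b, ρ.message w c x := by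
    refine Finset.prod_congr rfl fun c hc ↦ message_update_of_notMem_scope (fun hjc ↦ ?_) x _
    obtain ⟨hcT, hcj⟩ := Finset.mem_sdiff.1 hc
    exact hcj (Finset.mem_erase.2 ⟨fun e ↦ hbT (e ▸ hcT), by simpa [nbr] using hjc⟩)
  have near : (1 - q j b) * ∏ c ∈ (Φ.nbr j).erase b, ρ.message w c x =
      q j b * ∏ c ∈ (Φ.nbr j).erase b, ρ.message w c (Function.update x j !Φ.z b j) := by
    rw [prod_message_nbr_erase hj, prod_message_nbr_erase hj, hx, Function.update_self]
    exact hqw.variable_eq b j hjb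
  rw [← Finset.prod_sdiff nbr_subset, ← Finset.prod_sdiff nbr_subset, far]
  linear_combination (∏ c ∈ T \ (Φ.nbr j).erase b, ρ.message w c x) * near

variable [Fintype V]

lemma sum_children_unsat_mul_prod_message (hqw : Φ.IsSumProductFixedPoint q w) (hbT : b ∉ T)
    (hT : ∀ c, ρ.depth b < ρ.depth c → c ∈ T) {φ : (V → Bool) → R}
    (hφ : DependsOn φ (ρ.children b : Set V)ᶜ) :
    ∑ x with ∀ j ∈ ρ.children b, x j = Φ.z b j, φ x * ∏ c ∈ T, ρ.message w c x =
      (∏ j ∈ ρ.children b, q j b) * ∑ x, φ x * ∏ c ∈ T, ρ.message w c x := by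
  refine sum_filter_forall_eq_prod_mul_sum fun j hj x hx ↦ ?_
  have φ_update : φ (Function.update x j !Φ.z b j) = φ x :=
    hφ fun l hl ↦ Function.update_of_ne (ne_of_mem_of_not_mem hj hl).symm _ _
  rw [φ_update]
  linear_combination φ x * one_sub_mul_prod_message hqw hbT hT hj hx

lemma sum_satisfies_mul_prod_message (hqw : Φ.IsSumProductFixedPoint q w) (hbT : b ∉ T)
    (hT : ∀ c, ρ.depth b < ρ.depth c → c ∈ T) {φ : (V → Bool) → R}
    (hφ : DependsOn φ (ρ.children b : Set V)ᶜ) :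
    ∑ x with Φ.Satisfies x b, φ x * ∏ c ∈ T, ρ.message w c x =
      ∑ x, φ x * ∏ c ∈ insert b T, ρ.message w c x := by
  set P := ∏ j ∈ ρ.children b, q j b with hP
  set ψ : (V → Bool) → R := fun x ↦ if x (ρ.parent b) = Φ.z b (ρ.parent b) then φ x else 0
  have hψ : DependsOn ψ (ρ.children b : Set V)ᶜ := by
    intro x y hxy
    simp only [ψ, hφ hxy, hxy (ρ.parent b) (by simp [children])]
  have unsat : ∑ x with ¬Φ.Satisfies x b, φ x * ∏ c ∈ T, ρ.message w c x =
      P * ∑ x, ψ x * ∏ c ∈ T, ρ.message w c x := by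
    rw [hP, ← sum_children_unsat_mul_prod_message hqw hbT hT hψ]
    simp only [not_satisfies_iff (ρ := ρ), ψ, ite_mul, zero_mul]
    rw [← Finset.sum_filter, Finset.filter_filter]
    simp only [and_comm]
  have message_eq (x : V → Bool) : φ x * ∏ c ∈ insert b T, ρ.message w c x =
      φ x * ∏ c ∈ T, ρ.message w c x - P * (ψ x * ∏ c ∈ T, ρ.message w c x) := by
    rw [Finset.prod_insert hbT, message, hqw.clause_eq b _ (ρ.parent_mem b)]
    simp only [ψ, hP, children]
    split_ifs <;> ring
  rw [Finset.sum_congr rfl fun x _ ↦ message_eq x, Finset.sum_sub_distrib, ← Finset.mul_sum,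
    ← unsat, ← Finset.sum_filter_add_sum_filter_not Finset.univ (Φ.Satisfies · b),
    add_sub_cancel_right]

lemma sum_satisfies_eq_sum_prod_message (ρ : Φ.Rooting a) (hqw : Φ.IsSumProductFixedPoint q w)
    {φ : (V → Bool) → R} (hφ : DependsOn φ (Φ.scope a : Set V)) {S : Finset A} (haS : a ∉ S) :
    ∑ x with ∀ c ∈ S, Φ.Satisfies x c, φ x * ∏ c ∈ (insert a S)ᶜ, ρ.message w c x =
      ∑ x, φ x * ∏ c ∈ {a}ᶜ, ρ.message w c x := by
  induction S using Finset.induction_on_max_value ρ.depth with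
  | empty => simp
  | insert b S hbS hmax ih =>
    obtain ⟨hab, haS⟩ : a ≠ b ∧ a ∉ S := by simpa using haS
    have hb : b ∉ insert a S := by simp [hab.symm, hbS]
    have depth_le : ∀ c ∈ insert a S, ρ.depth c ≤ ρ.depth b := by
      simpa using ⟨ρ.depth_root_le b, hmax⟩
    have deeper_mem (c : A) (hc : ρ.depth b < ρ.depth c) : c ∈ (insert b (insert a S))ᶜ := by
      simp only [Finset.mem_compl, Finset.mem_insert (b := b), not_or]
      exact ⟨fun e ↦ hc.ne' (congrArg ρ.depth e), fun hcS ↦ (depth_le c hcS).not_gt hc⟩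
    have scope_subset (c : A) (hc : c ∈ insert a S) :
        (Φ.scope c : Set V) ⊆ (ρ.children b : Set V)ᶜ :=
      ρ.scope_subset_compl_children (ne_of_mem_of_not_mem hc hb) (depth_le c hc)
    set ψ : (V → Bool) → R := fun x ↦ if ∀ c ∈ S, Φ.Satisfies x c then φ x else 0
    have hψ : DependsOn ψ (ρ.children b : Set V)ᶜ :=
      dependsOn_ite_forall_satisfies (hφ.mono (scope_subset a (Finset.mem_insert_self a S)))
        fun c hc ↦ scope_subset c (Finset.mem_insert_of_mem hc)
    calc ∑ x with ∀ c ∈ insert b S, Φ.Satisfies x c,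
          φ x * ∏ c ∈ (insert a (insert b S))ᶜ, ρ.message w c x
        = ∑ x with Φ.Satisfies x b, ψ x * ∏ c ∈ (insert b (insert a S))ᶜ, ρ.message w c x := by
          simp only [ψ, ite_mul, zero_mul]
          rw [← Finset.sum_filter, Finset.filter_filter, Finset.insert_comm]
          simp only [Finset.forall_mem_insert]
      _ = ∑ x, ψ x * ∏ c ∈ (insert a S)ᶜ, ρ.message w c x := by
          rw [sum_satisfies_mul_prod_message hqw (by simp) deeper_mem hψ,
            Finset.insert_compl_insert hb]
      _ = ∑ x with ∀ c ∈ S, Φ.Satisfies x c, φ x * ∏ c ∈ (insert a S)ᶜ, ρ.message w c x := by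
          simp only [ψ, ite_mul, zero_mul, Finset.sum_filter]
      _ = ∑ x, φ x * ∏ c ∈ {a}ᶜ, ρ.message w c x := ih haS

lemma card_solutions_filter_eq_sum (ρ : Φ.Rooting a) (hqw : Φ.IsSumProductFixedPoint q w)
    {Q : (V → Bool) → Prop} [DecidablePred Q] (hQ : DependsOn Q (Φ.scope a : Set V))
    (hQa : ∀ x, Q x → Φ.Satisfies x a) :
    ((Φ.solutions.filter Q).card : R) = ∑ x with Q x, ∏ c ∈ {a}ᶜ, ρ.message w c x := by
  have hφ : DependsOn (fun x ↦ if Q x then (1 : R) else 0) (Φ.scope a : Set V) :=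
    fun x y hxy ↦ by simp only [hQ hxy]
  have isSolution_iff (x : V → Bool) (hx : Q x) :
      Φ.IsSolution x ↔ ∀ c ∈ ({a}ᶜ : Finset A), Φ.Satisfies x c := by
    refine ⟨fun h c _ ↦ h c, fun h c ↦ ?_⟩
    by_cases hca : c = a
    · exact hca ▸ hQa x hx
    · exact h c (by simpa using hca)
  calc ((Φ.solutions.filter Q).card : R)
      = ∑ x with ∀ c ∈ ({a}ᶜ : Finset A), Φ.Satisfies x c, if Q x then 1 else 0 := by
        rw [Finset.sum_boole, solutions, Finset.filter_filter, Finset.filter_filter]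
        congr 2
        exact Finset.filter_congr fun x _ ↦ and_congr_left (isSolution_iff x)
    _ = ∑ x, (if Q x then 1 else 0) * ∏ c ∈ {a}ᶜ, ρ.message w c x := by
        simpa using ρ.sum_satisfies_eq_sum_prod_message hqw hφ (S := {a}ᶜ) (by simp)
    _ = ∑ x with Q x, ∏ c ∈ {a}ᶜ, ρ.message w c x := by
        simp only [ite_mul, one_mul, zero_mul, Finset.sum_filter]

end Rooting

variable [Fintype V] [Fintype A] [DecidableEq V] [DecidableEq A]

theorem card_solutions_unsat_eq_prod_mul_card (hΦ : Φ.factorGraph.IsAcyclic)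
    (hne : ∀ b, (Φ.scope b).Nonempty) {q : V → A → R} {w : A → V → R}
    (hqw : Φ.IsSumProductFixedPoint q w) {a : A} {i : V} (hia : i ∈ Φ.scope a) {v : Bool}
    (hv : v ≠ Φ.z a i) :
    ((Φ.solutions.filter fun y ↦
        y i = v ∧ ∀ j ∈ (Φ.scope a).erase i, y j = Φ.z a j).card : R) =
      (∏ j ∈ (Φ.scope a).erase i, q j a) * (Φ.solutions.filter fun y ↦ y i = v).card := by
  obtain ⟨ρ, rfl⟩ := exists_rooting hΦ hne hia
  change ((Φ.solutions.filter fun y ↦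
      y (ρ.parent a) = v ∧ ∀ j ∈ ρ.children a, y j = Φ.z a j).card : R) =
    (∏ j ∈ ρ.children a, q j a) * (Φ.solutions.filter fun y ↦ y (ρ.parent a) = v).card
  have sat (x : V → Bool) (hx : x (ρ.parent a) = v) : Φ.Satisfies x a :=
    ⟨ρ.parent a, hia, hx ▸ hv⟩
  have hroot : DependsOn (fun x : V → Bool ↦ x (ρ.parent a) = v) (Φ.scope a : Set V) :=
    fun x y hxy ↦ by simp only [hxy _ hia]
  have hunsat : DependsOn
      (fun x : V → Bool ↦ x (ρ.parent a) = v ∧ ∀ j ∈ ρ.children a, x j = Φ.z a j)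
      (Φ.scope a : Set V) := fun x y hxy ↦ propext <| and_congr (hroot hxy).to_iff <|
    forall₂_congr fun j hj ↦ by rw [hxy j (ρ.mem_children.1 hj).2]
  have hφ : DependsOn (fun x : V → Bool ↦ if x (ρ.parent a) = v then (1 : R) else 0)
      (ρ.children a : Set V)ᶜ := fun x y hxy ↦ by
    simp only [hxy (ρ.parent a) (by simp [Rooting.children])]
  have average := Rooting.sum_children_unsat_mul_prod_message hqw (T := {a}ᶜ) (by simp)
    (fun c hc ↦ by simpa using fun e ↦ hc.ne' (congrArg ρ.depth e)) hφ
  rw [ρ.card_solutions_filter_eq_sum hqw hroot sat,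
    ρ.card_solutions_filter_eq_sum hqw hunsat fun x hx ↦ sat x hx.1]
  simpa only [ite_mul, one_mul, zero_mul, ← Finset.sum_filter, Finset.filter_filter, and_comm]
    using average

end SumProduct

section BeliefPropagation

variable [Fintype A] [DecidableEq V] [DecidableEq A] {k : ℕ} {h : V → A → ℝ} {u : A → V → ℝ}

lemma IsBPFixedPoint.exp_neg_two_mul (hbp : Φ.IsBPFixedPoint k h u) (hk2 : 2 ≤ k)
    (hk : ∀ b, (Φ.scope b).card = k) {a : A} {i : V} (hia : i ∈ Φ.scope a) :
    Real.exp (-2 * u a i) = 1 - ∏ j ∈ (Φ.scope a).erase i, (1 - Real.tanh (h j a)) / 2 := by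
  have hcard : ((Φ.scope a).erase i).card = k - 1 := by rw [Finset.card_erase_of_mem hia, hk]
  have prod_lt_one : ∏ j ∈ (Φ.scope a).erase i, (1 - Real.tanh (h j a)) / 2 < 1 := by
    have := Finset.prod_lt_prod_of_nonempty (s := (Φ.scope a).erase i)
      (f := fun j ↦ (1 - Real.tanh (h j a)) / 2) (g := fun _ ↦ 1)
      (fun j _ ↦ by linarith [Real.tanh_lt_one (h j a)])
      (fun j _ ↦ by linarith [Real.neg_one_lt_tanh (h j a)])
      (Finset.card_pos.1 (by lia))
    simpa using this
  rw [(hbp a i hia).2, bpUval, ← hcard, ← Finset.prod_const, ← Finset.prod_div_distrib,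
    ← mul_assoc, show (-2 : ℝ) * -(1 / 2) = 1 by norm_num, one_mul,
    Real.exp_log (sub_pos.2 prod_lt_one)]

lemma IsBPFixedPoint.isSumProductFixedPoint (hbp : Φ.IsBPFixedPoint k h u) (hk2 : 2 ≤ k)
    (hk : ∀ b, (Φ.scope b).card = k) :
    Φ.IsSumProductFixedPoint (fun j b ↦ (1 - Real.tanh (h j b)) / 2)
      (fun b j ↦ Real.exp (-2 * u b j)) where
  clause_eq a i hia := hbp.exp_neg_two_mul hk2 hk hia
  variable_eq a i hia := by
    have field_eq : -2 * ∑ b ∈ Φ.disag i a, u b i =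
        2 * h i a + -2 * ∑ b ∈ Φ.agree i a, u b i := by
      rw [(hbp a i hia).1]
      ring
    simp only [← Real.exp_sum, ← Finset.mul_sum]
    rw [field_eq, Real.exp_add]
    linear_combination
      Real.exp (-2 * ∑ b ∈ Φ.agree i a, u b i) / 2 * one_add_tanh_eq_mul_exp (h i a)

end BeliefPropagation

end KSAT

theorem bp_conditional_unsat_probability_general
    {V A : Type} [Fintype V] [Fintype A] [DecidableEq V] [DecidableEq A]
    (k : ℕ) (hk2 : 2 ≤ k) (Φ : KSAT V A) (hk : ∀ a : A, (Φ.scope a).card = k)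
    (hacyclic : Φ.factorGraph.IsAcyclic)
    (h : V → A → ℝ) (u : A → V → ℝ) (hbp : Φ.IsBPFixedPoint k h u)
    (a : A) (i : V) (hia : i ∈ Φ.scope a) (v : Bool) (hv : v ≠ Φ.z a i)
    (hpos : 0 < (Φ.solutions.filter fun y => y i = v).card) :
    ((Φ.solutions.filter fun y =>
        y i = v ∧ ∀ j ∈ (Φ.scope a).erase i, y j = Φ.z a j).card : ℝ) /
      ((Φ.solutions.filter fun y => y i = v).card : ℝ) =
    ∏ j ∈ (Φ.scope a).erase i, (1 - Real.tanh (h j a)) / 2 := by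
  have scope_nonempty (b : A) : (Φ.scope b).Nonempty := Finset.card_pos.1 (by rw [hk]; lia)
  rw [div_eq_iff (by exact_mod_cast hpos.ne')]
  exact KSAT.card_solutions_unsat_eq_prod_mul_card hacyclic scope_nonempty
    (hbp.isSumProductFixedPoint hk2 hk) hia hv

/-- on a tree factor graph, for a clause `a`, a variable
`i ∈ ∂a` and a value `v ≠ z(i,a)` of positive probability, the conditional
probability under the uniform measure over solutions, given `x_i = v`, that
all the other variables of `a` take their unsatisfying values equals
`∏_{j ∈ ∂a∖i} (1 - tanh h_{j→a})/2`. -/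
theorem bp_conditional_unsat_probability
    {V A : Type} [Fintype V] [Fintype A] [DecidableEq V] [DecidableEq A]
    (k : ℕ) (hk2 : 2 ≤ k) (Φ : KSAT V A) (hk : ∀ a : A, (Φ.scope a).card = k)
    (htree : Φ.factorGraph.IsTree) (hsat : (Φ.solutions).Nonempty)
    (h : V → A → ℝ) (u : A → V → ℝ) (hbp : Φ.IsBPFixedPoint k h u)
    (a : A) (i : V) (hia : i ∈ Φ.scope a) (v : Bool) (hv : v ≠ Φ.z a i)
    (hpos : 0 < (Φ.solutions.filter fun y => y i = v).card) :
    ((Φ.solutions.filter fun y =>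
        y i = v ∧ ∀ j ∈ (Φ.scope a).erase i, y j = Φ.z a j).card : ℝ) /
      ((Φ.solutions.filter fun y => y i = v).card : ℝ) =
    ∏ j ∈ (Φ.scope a).erase i, (1 - Real.tanh (h j a)) / 2 := by
  exact bp_conditional_unsat_probability_general k hk2 Φ hk htree.isAcyclic h u hbp a i hia v hv
    hpos
end

section
/- Let k≥3 be an integer and define α̂_spin(k)=(2^k/k)·((k−1)/(k−2))^{k−2}. If 0<α<α̂_spin(k), then for every θ∈[0,1] and every fixed point φ∈[0,1] of g_θ, the derivative g_θ'(φ)=(1−θ)·c·(k−1)·φ^{k−2}·exp(−c·φ^{k−1}) satisfies g_θ'(φ) ≤ α/α̂_spin(k) < 1. -/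
/-- `g_θ(φ) = θ + (1-θ)·(1 - exp(-c·φ^{k-1}))` with `c = αk/2^k`. -/
noncomputable def gTheta (k : ℕ) (α θ φ : ℝ) : ℝ :=
  θ + (1 - θ) * (1 - Real.exp (-(α * k / 2 ^ k) * φ ^ (k - 1)))

/-- The set of fixed points of `g_θ` in `[0,1]`. -/
def gFixSet (k : ℕ) (α θ : ℝ) : Set ℝ :=
  {φ : ℝ | φ ∈ Set.Icc (0 : ℝ) 1 ∧ gTheta k α θ φ = φ}

/-- The derivative `g_θ'(φ) = (1-θ)·c·(k-1)·φ^{k-2}·exp(-c·φ^{k-1})`,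
`c = αk/2^k`. -/
noncomputable def gThetaDeriv (k : ℕ) (α θ φ : ℝ) : ℝ :=
  (1 - θ) * (α * k / 2 ^ k) * (k - 1) * φ ^ (k - 2) *
    Real.exp (-(α * k / 2 ^ k) * φ ^ (k - 1))

/-- The spinodal threshold `α̂_spin(k) = (2^k/k)·((k-1)/(k-2))^{k-2}`. -/
noncomputable def alphaSpin (k : ℕ) : ℝ :=
  2 ^ k / k * (((k : ℝ) - 1) / ((k : ℝ) - 2)) ^ (k - 2)

/-!
At a fixed point, `(1-θ)·exp(-c·φ^{k-1}) = 1 - φ`, so `θ` and the exponential disappear from the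
derivative: `g_θ'(φ) = c·(k-1)·φ^{k-2}·(1-φ)`. By AM-GM, `(k-1)·φ^{k-2}·(1-φ)` is at most
`((k-2)/(k-1))^{k-2}`, attained at `φ = (k-2)/(k-1)`, and `α̂_spin(k)` is exactly the `α` for which
the resulting bound equals `1`.
-/

theorem add_one_pow_mul_pow_mul_le_pow_mul_add_pow {R : Type*} [CommRing R] [LinearOrder R]
    [IsStrictOrderedRing R] (n : ℕ) {x y : R} (hx : 0 ≤ x) (hxy : 0 ≤ x + y) :
    (n + 1) ^ (n + 1) * (x ^ n * y) ≤ n ^ n * (x + y) ^ (n + 1) := by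
  rcases n.eq_zero_or_pos with rfl | hn
  · simpa using hx
  have hn_cast : (0 : R) < n := Nat.cast_pos.2 hn
  refine le_of_mul_le_mul_left ?_ hn_cast
  -- Bernoulli's inequality for `a ^ (n + 1)` around `a = (n + 1) * x`, evaluated at `n * (x + y)`.
  have bernoulli := pow_add_mul_le_add_pow (a := (n + 1) * x) (b := n * y - x)
    (by positivity) (by linarith [mul_nonneg hn_cast.le hx, mul_nonneg hn_cast.le hxy]) (n + 1)
  calc (n : R) * ((n + 1) ^ (n + 1) * (x ^ n * y))
      = ((n + 1) * x) ^ (n + 1)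
          + (n + 1 : ℕ) * ((n + 1) * x) ^ (n + 1 - 1) * (n * y - x) := by
        rw [Nat.add_sub_cancel, mul_pow, mul_pow]; push_cast; ring
    _ ≤ ((n + 1) * x + (n * y - x)) ^ (n + 1) := bernoulli
    _ = (n * (x + y)) ^ (n + 1) := by ring
    _ = n * (n ^ n * (x + y) ^ (n + 1)) := by rw [mul_pow, pow_succ']; ring

theorem add_one_mul_pow_mul_one_sub_le {K : Type*} [Field K] [LinearOrder K]
    [IsStrictOrderedRing K] (n : ℕ) {x : K} (hx : 0 ≤ x) :
    (n + 1) * x ^ n * (1 - x) ≤ (n / (n + 1)) ^ n := by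
  have amgm := add_one_pow_mul_pow_mul_le_pow_mul_add_pow n (y := 1 - x) hx (by simp)
  rw [div_pow, le_div_iff₀ (by positivity)]
  calc (n + 1) * x ^ n * (1 - x) * (n + 1) ^ n
      = (n + 1) ^ (n + 1) * (x ^ n * (1 - x)) := by ring
    _ ≤ n ^ n * (x + (1 - x)) ^ (n + 1) := amgm
    _ = n ^ n := by simp only [add_sub_cancel, one_pow, mul_one]

theorem one_sub_gTheta (k : ℕ) (α θ φ : ℝ) :
    1 - gTheta k α θ φ = (1 - θ) * Real.exp (-(α * k / 2 ^ k) * φ ^ (k - 1)) := by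
  rw [gTheta]; ring

theorem gThetaDeriv_eq_mul_one_sub_gTheta (k : ℕ) (α θ φ : ℝ) :
    gThetaDeriv k α θ φ =
      α * k / 2 ^ k * ((k - 1) * φ ^ (k - 2) * (1 - gTheta k α θ φ)) := by
  rw [one_sub_gTheta, gThetaDeriv]; ring

theorem div_alphaSpin (k : ℕ) (α : ℝ) :
    α / alphaSpin k = α * k / 2 ^ k * (((k : ℝ) - 2) / (k - 1)) ^ (k - 2) := by
  rw [alphaSpin, ← div_div, div_div_eq_mul_div, div_eq_mul_inv _ (_ ^ _), ← inv_pow, inv_div]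

theorem gThetaDeriv_le_div_alphaSpin {k : ℕ} (hk : 3 ≤ k) {α θ φ : ℝ} (hα : 0 ≤ α)
    (hφ : 0 ≤ φ) (hfix : gTheta k α θ φ = φ) :
    gThetaDeriv k α θ φ ≤ α / alphaSpin k := by
  have hcast : ((k - 2 : ℕ) : ℝ) = k - 2 := Nat.cast_sub (by omega)
  have hsucc : (k : ℝ) - 2 + 1 = k - 1 := by ring
  have amgm : ((k : ℝ) - 1) * φ ^ (k - 2) * (1 - φ) ≤ ((k - 2) / (k - 1)) ^ (k - 2) := by
    simpa only [hcast, hsucc] using add_one_mul_pow_mul_one_sub_le (k - 2) hφ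
  rw [gThetaDeriv_eq_mul_one_sub_gTheta, hfix, div_alphaSpin]
  gcongr

theorem gTheta_deriv_lt_one_below_spinodal_general {k : ℕ} (hk : 3 ≤ k) {α : ℝ} (hα : 0 ≤ α)
    (hαs : α < alphaSpin k) {θ φ : ℝ} (hφ : 0 ≤ φ) (hfix : gTheta k α θ φ = φ) :
    gThetaDeriv k α θ φ ≤ α / alphaSpin k ∧ α / alphaSpin k < 1 :=
  ⟨gThetaDeriv_le_div_alphaSpin hk hα hφ hfix, (div_lt_one (hα.trans_lt hαs)).2 hαs⟩

/-- for `k ≥ 3` and `0 < α < α̂_spin(k)`, at every fixed point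
`φ ∈ [0,1]` of `g_θ` (for any `θ ∈ [0,1]`) the derivative satisfies
`g_θ'(φ) ≤ α/α̂_spin(k) < 1`. -/
theorem gTheta_deriv_lt_one_below_spinodal
    (k : ℕ) (hk : 3 ≤ k) (α : ℝ) (hα : 0 < α) (hαs : α < alphaSpin k)
    (θ : ℝ) (hθ : θ ∈ Set.Icc (0 : ℝ) 1)
    (φ : ℝ) (hφ : φ ∈ Set.Icc (0 : ℝ) 1) (hfix : gTheta k α θ φ = φ) :
    gThetaDeriv k α θ φ ≤ α / alphaSpin k ∧ α / alphaSpin k < 1 :=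
  gTheta_deriv_lt_one_below_spinodal_general hk hα.le hαs hφ.1 hfix
end

section
/- Let k≥3 be an integer and 0<α<α̂_spin(k)=(2^k/k)·((k−1)/(k−2))^{k−2}. Then for every θ∈[0,1] the function g_θ has exactly one fixed point φ̂(θ) in [0,1], and the map θ↦φ̂(θ) is continuous on [0,1]. -/
/-! A point `φ` is fixed by `g_θ` exactly when `θ = 1 - (1-φ) exp (c φ^(k-1))`, so `θ` is a function
of its fixed point `φ`. This function sends `0` to `0` and `1` to `1`, and its derivative has the
sign of `1 - c (k-1) (1-φ) φ^(k-2)`. By Bernoulli's inequality the maximum of `(k-1) (1-φ) φ^(k-2)`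
is `((k-2)/(k-1))^(k-2)`, attained only at `φ = (k-2)/(k-1)`. Hence up to and including the spinodal
value of `c` the function is a strictly increasing bijection of `[0, 1]`, and its inverse, which is
continuous by compactness, is `θ ↦ φ̂(θ)`. -/

open Set Function

lemma continuousOn_image_of_leftInvOn_of_isCompact {X Y : Type*} [TopologicalSpace X]
    [TopologicalSpace Y] [T2Space Y] {f : X → Y} {g : Y → X} {s : Set X} (hs : IsCompact s)
    (hf : ContinuousOn f s) (hg : LeftInvOn g f s) : ContinuousOn g (f '' s) := by
  refine continuousOn_iff_isClosed.2 fun t ht => ⟨f '' (t ∩ s), ?_, ?_⟩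
  · exact ((hs.inter_left ht).image_of_continuousOn (hf.mono inter_subset_right)).isClosed
  · rw [← hg.image_inter', inter_eq_left.2 (image_mono inter_subset_right)]

lemma strictMonoOn_Icc_of_deriv_pos_of_ne {f : ℝ → ℝ} {a b p : ℝ} (hp : p ∈ Icc a b)
    (hf : ContinuousOn f (Icc a b)) (hf' : ∀ x ∈ Ioo a b, x ≠ p → 0 < deriv f x) :
    StrictMonoOn f (Icc a b) := by
  have left : StrictMonoOn f (Icc a p) := by
    refine strictMonoOn_of_deriv_pos (convex_Icc a p) (hf.mono (Icc_subset_Icc_right hp.2)) ?_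
    rw [interior_Icc]
    exact fun x hx => hf' x ⟨hx.1, hx.2.trans_le hp.2⟩ hx.2.ne
  have right : StrictMonoOn f (Icc p b) := by
    refine strictMonoOn_of_deriv_pos (convex_Icc p b) (hf.mono (Icc_subset_Icc_left hp.1)) ?_
    rw [interior_Icc]
    exact fun x hx => hf' x ⟨hp.1.trans_lt hx.1, hx.2⟩ hx.1.ne'
  rw [← Icc_union_Icc_eq_Icc hp.1 hp.2]
  exact left.union right (isGreatest_Icc hp.1) (isLeast_Icc hp.2)

lemma add_one_mul_pow_sub_mul_pow_succ_lt_one {R : Type*} [CommRing R] [LinearOrder R]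
    [IsStrictOrderedRing R] {t : R} (ht : 0 ≤ t) (ht₁ : t ≠ 1) {n : ℕ} (hn : 1 ≤ n) :
    (n + 1) * t ^ n - n * t ^ (n + 1) < 1 := by
  induction n, hn using Nat.le_induction with
  | base =>
    have : 0 < (t - 1) ^ 2 := sq_pos_of_ne_zero (sub_ne_zero.2 ht₁)
    push_cast
    linarith
  | succ m _ ih =>
    have : 0 ≤ (m + 1) * t ^ m * (t - 1) ^ 2 := by positivity
    have hstep : (m + 1 + 1) * t ^ (m + 1) - (m + 1) * t ^ (m + 1 + 1) =
        (m + 1) * t ^ m - m * t ^ (m + 1) - (m + 1) * t ^ m * (t - 1) ^ 2 := by ring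
    push_cast
    linarith

lemma mul_one_sub_mul_pow_lt_one {x : ℝ} (hx : 0 ≤ x) {n : ℕ} (hxn : x ≠ n / (n + 1)) :
    ((n + 1) / n) ^ n * ((n + 1) * (1 - x) * x ^ n) < 1 := by
  rcases Nat.eq_zero_or_pos n with rfl | hn
  · have : 0 < x := hx.lt_of_ne' (by simpa using hxn)
    simpa using this
  · have : (0 : ℝ) < n := by exact_mod_cast hn
    have ht₁ : (n + 1) / n * x ≠ 1 := by
      contrapose hxn
      field_simp at hxn ⊢
      linarith
    calc ((n + 1) / n) ^ n * ((n + 1) * (1 - x) * x ^ n)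
        = (n + 1) * ((n + 1) / n * x) ^ n - n * ((n + 1) / n * x) ^ (n + 1) := by
          rw [pow_succ, mul_pow]
          field_simp
      _ < 1 := add_one_mul_pow_sub_mul_pow_succ_lt_one (by positivity) ht₁ hn

/-- The value of `θ` for which `φ` is a fixed point of `g_θ`, where `c = αk/2^k` and `m = k - 1`.
As a function of `φ` it is the inverse of the fixed-point map `θ ↦ φ̂(θ)`. -/
noncomputable def fixedPointTheta (c : ℝ) (m : ℕ) (φ : ℝ) : ℝ :=
  1 - (1 - φ) * Real.exp (c * φ ^ m)

lemma mem_gFixSet_iff {k : ℕ} {α θ φ : ℝ} :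
    φ ∈ gFixSet k α θ ↔ φ ∈ Icc 0 1 ∧ fixedPointTheta (α * k / 2 ^ k) (k - 1) φ = θ := by
  set E := Real.exp (α * k / 2 ^ k * φ ^ (k - 1)) with hE
  have hg : gTheta k α θ φ = 1 - (1 - θ) / E := by
    rw [gTheta, neg_mul, Real.exp_neg, ← hE]
    ring
  refine and_congr_right fun _ => ?_
  calc gTheta k α θ φ = φ
      ↔ 1 - φ = (1 - θ) / E := by rw [hg, sub_eq_iff_eq_add', sub_eq_iff_eq_add]
    _ ↔ (1 - φ) * E = 1 - θ := eq_div_iff (Real.exp_ne_zero _)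
    _ ↔ fixedPointTheta (α * k / 2 ^ k) (k - 1) φ = θ := by
      rw [fixedPointTheta, ← hE, sub_eq_iff_eq_add, eq_sub_iff_add_eq', eq_comm]

lemma continuous_fixedPointTheta (c : ℝ) (m : ℕ) : Continuous (fixedPointTheta c m) := by
  unfold fixedPointTheta
  fun_prop

lemma hasDerivAt_fixedPointTheta (c : ℝ) (n : ℕ) (x : ℝ) :
    HasDerivAt (fixedPointTheta c (n + 1))
      (Real.exp (c * x ^ (n + 1)) * (1 - c * ((n + 1) * (1 - x) * x ^ n))) x := by
  have hexp := ((hasDerivAt_pow (n + 1) x).const_mul c).exp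
  refine ((((hasDerivAt_id' x).const_sub 1).mul hexp).const_sub 1).congr_deriv ?_
  rw [Nat.add_sub_cancel]
  push_cast
  ring

lemma strictMonoOn_fixedPointTheta {c : ℝ} {n : ℕ} (hc : c ≤ ((n + 1) / n) ^ n) :
    StrictMonoOn (fixedPointTheta c (n + 1)) (Icc 0 1) := by
  have hp : (n / (n + 1) : ℝ) ∈ Icc 0 1 :=
    ⟨by positivity, div_le_one_of_le₀ (by linarith) (by positivity)⟩
  refine strictMonoOn_Icc_of_deriv_pos_of_ne hp (continuous_fixedPointTheta _ _).continuousOn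
    fun x hx hxp => ?_
  rw [(hasDerivAt_fixedPointTheta c n x).deriv]
  have hfactor : 0 ≤ (n + 1) * (1 - x) * x ^ n :=
    mul_nonneg (mul_nonneg (by positivity) (sub_nonneg.2 hx.2.le)) (pow_nonneg hx.1.le n)
  have hslope : c * ((n + 1) * (1 - x) * x ^ n) < 1 :=
    (mul_le_mul_of_nonneg_right hc hfactor).trans_lt (mul_one_sub_mul_pow_lt_one hx.1.le hxp)
  exact mul_pos (Real.exp_pos _) (sub_pos.2 hslope)

lemma bijOn_fixedPointTheta {c : ℝ} {n : ℕ} (hc : c ≤ ((n + 1) / n) ^ n) :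
    BijOn (fixedPointTheta c (n + 1)) (Icc 0 1) (Icc 0 1) := by
  have hmono := strictMonoOn_fixedPointTheta hc
  have himage := (continuous_fixedPointTheta c (n + 1)).continuousOn.image_Icc_of_monotoneOn
    zero_le_one hmono.monotoneOn
  have hzero : fixedPointTheta c (n + 1) 0 = 0 := by simp [fixedPointTheta]
  have hone : fixedPointTheta c (n + 1) 1 = 1 := by simp [fixedPointTheta]
  rw [hzero, hone] at himage
  simpa only [himage] using hmono.injOn.bijOn_image

lemma le_alphaSpin_add_two_iff {α : ℝ} {n : ℕ} :
    α ≤ alphaSpin (n + 2) ↔ α * (n + 2 : ℕ) / 2 ^ (n + 2) ≤ (((n : ℝ) + 1) / n) ^ n := by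
  have hk : (0 : ℝ) < (n + 2 : ℕ) := by positivity
  have hpred : ((n + 2 : ℕ) : ℝ) - 1 = n + 1 := by push_cast; ring
  have hpred₂ : ((n + 2 : ℕ) : ℝ) - 2 = n := by push_cast; ring
  rw [alphaSpin, hpred, hpred₂, Nat.add_sub_cancel, div_mul_eq_mul_div, le_div_iff₀ hk,
    div_le_iff₀' (by positivity)]

-- For `k = 2` the quotient in `alphaSpin` is `1 / 0`, but its exponent is `0`: the threshold is
-- `2`, the limit of the formula as `k` decreases to `2`.
theorem gTheta_unique_fixed_point_continuous_general {k : ℕ} (hk : 2 ≤ k) {α : ℝ}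
    (hα : α ≤ alphaSpin k) :
    (∀ θ ∈ Icc (0 : ℝ) 1, ∃! φ : ℝ, φ ∈ gFixSet k α θ) ∧
    ∃ F : ℝ → ℝ, ContinuousOn F (Icc (0 : ℝ) 1) ∧
      ∀ θ ∈ Icc (0 : ℝ) 1, F θ ∈ gFixSet k α θ := by
  obtain ⟨n, rfl⟩ := Nat.exists_eq_add_of_le' hk
  set h := fixedPointTheta (α * (n + 2 : ℕ) / 2 ^ (n + 2)) (n + 1)
  have hbij : BijOn h (Icc 0 1) (Icc 0 1) :=
    bijOn_fixedPointTheta (le_alphaSpin_add_two_iff.1 hα)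
  set F := invFunOn h (Icc 0 1)
  have hF : InvOn F h (Icc 0 1) (Icc 0 1) := hbij.invOn_invFunOn
  have hcont : ContinuousOn F (Icc 0 1) := by
    have := continuousOn_image_of_leftInvOn_of_isCompact isCompact_Icc
      (continuous_fixedPointTheta _ _).continuousOn hF.1
    rwa [hbij.image_eq] at this
  have hfix : ∀ θ ∈ Icc (0 : ℝ) 1, F θ ∈ gFixSet (n + 2) α θ := fun θ hθ =>
    mem_gFixSet_iff.2 ⟨hbij.surjOn.mapsTo_invFunOn hθ, hF.2 hθ⟩
  refine ⟨fun θ hθ => ⟨F θ, hfix θ hθ, fun φ hφ => ?_⟩, F, hcont, hfix⟩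
  obtain ⟨hφ_mem, rfl⟩ := mem_gFixSet_iff.1 hφ
  exact (hF.1 hφ_mem).symm

/-- for `k ≥ 3` and `0 < α < α̂_spin(k)`, for every `θ ∈ [0,1]`
the map `g_θ` has exactly one fixed point `φ̂(θ)` in `[0,1]`, and the map
`θ ↦ φ̂(θ)` is continuous on `[0,1]`. -/
theorem gTheta_unique_fixed_point_continuous
    (k : ℕ) (hk : 3 ≤ k) (α : ℝ) (hα : 0 < α) (hαs : α < alphaSpin k) :
    (∀ θ ∈ Set.Icc (0 : ℝ) 1, ∃! φ : ℝ, φ ∈ gFixSet k α θ) ∧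
    ∃ F : ℝ → ℝ, ContinuousOn F (Set.Icc (0 : ℝ) 1) ∧
      ∀ θ ∈ Set.Icc (0 : ℝ) 1, F θ ∈ gFixSet k α θ :=
  gTheta_unique_fixed_point_continuous_general (by omega) hαs.le
end

section
/- Let k≥3 be an integer and define, for α>0, the tangency set T(k)={α>0 : there exist θ∈[0,1] and φ∈[0,1] with g_θ(φ)=φ and g_θ'(φ)=1}, where g_θ'(φ)=(1−θ)·c·(k−1)·φ^{k−2}·exp(−c·φ^{k−1}). Then T(k) is nonempty, its infimum equals α̂_spin(k)=(2^k/k)·((k−1)/(k−2))^{k−2}, and this infimum is attained (α̂_spin(k)∈T(k), with tangency point φ=(k−2)/(k−1)). -/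
/-- The point `(k-2)/(k-1)` where `φ ↦ (k-1)·φ^{k-2}·(1-φ)` is maximal on `[0,1]`; it is the
tangency point at the spinodal threshold `alphaSpin k`. -/
noncomputable def phiSpin (k : ℕ) : ℝ :=
  ((k : ℝ) - 2) / ((k : ℝ) - 1)

theorem succ_mul_pow_mul_one_sub_le {K : Type*} [Field K] [LinearOrder K] [IsStrictOrderedRing K]
    (n : ℕ) {x : K} (hx : 0 ≤ x) : (n + 1) * x ^ n * (1 - x) ≤ ((n : K) / (n + 1)) ^ n := by
  rcases n.eq_zero_or_pos with rfl | hn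
  · simpa using hx
  have hn : (0 : K) < n := by exact_mod_cast hn
  set y : K := n / (n + 1)
  have hy : (n + 1) * y = n := by simp only [y]; field_simp
  have hy₀ : 0 ≤ y := by positivity
  have tangent_le_pow : x ^ (n + 1) + (n + 1) * x ^ n * (y - x) ≤ y ^ (n + 1) := by
    simpa using pow_add_mul_le_add_pow (b := y - x) hx (by linarith) (n + 1)
  refine le_of_mul_le_mul_left ?_ hn
  calc n * ((n + 1) * x ^ n * (1 - x))
      = (n + 1) * (x ^ (n + 1) + (n + 1) * x ^ n * (y - x)) := by
        linear_combination -(n + 1) * x ^ n * hy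
    _ ≤ (n + 1) * y ^ (n + 1) := by gcongr
    _ = n * y ^ n := by linear_combination y ^ n * hy

theorem gThetaDeriv_eq_of_gTheta_eq {k : ℕ} {α θ φ : ℝ} (h : gTheta k α θ φ = φ) :
    gThetaDeriv k α θ φ = α * k / 2 ^ k * ((k - 1) * φ ^ (k - 2) * (1 - φ)) := by
  unfold gTheta at h
  unfold gThetaDeriv
  linear_combination -(α * k / 2 ^ k * (k - 1) * φ ^ (k - 2)) * h

theorem exists_gTheta_eq {k : ℕ} {α φ : ℝ} (hφ : φ ≤ 1)
    (hα : α * k / 2 ^ k * φ ^ (k - 1) ≤ φ) :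
    ∃ θ ∈ Set.Icc (0 : ℝ) 1, gTheta k α θ φ = φ := by
  set t := α * k / 2 ^ k * φ ^ (k - 1) with ht
  have hexp : (1 - φ) * Real.exp t ≤ 1 :=
    calc (1 - φ) * Real.exp t ≤ Real.exp (-φ) * Real.exp φ := by
          gcongr
          exact Real.one_sub_le_exp_neg φ
      _ = 1 := by rw [← Real.exp_add, neg_add_cancel, Real.exp_zero]
  have hexp₀ : 0 ≤ (1 - φ) * Real.exp t := mul_nonneg (sub_nonneg.2 hφ) (Real.exp_pos t).le
  refine ⟨1 - (1 - φ) * Real.exp t, ⟨by linarith, by linarith⟩, ?_⟩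
  have hcancel : Real.exp t * Real.exp (-t) = 1 := by
    rw [← Real.exp_add, add_neg_cancel, Real.exp_zero]
  rw [gTheta, neg_mul, ← ht]
  linear_combination -(1 - φ) * hcancel

section Spinodal

variable {k : ℕ}

theorem phiSpin_pos (hk : 3 ≤ k) : 0 < phiSpin k := by
  have hk : (3 : ℝ) ≤ k := by exact_mod_cast hk
  exact div_pos (by linarith) (by linarith)

theorem sub_one_mul_one_sub_phiSpin (hk : 2 ≤ k) : ((k : ℝ) - 1) * (1 - phiSpin k) = 1 := by
  have hk : (2 : ℝ) ≤ k := by exact_mod_cast hk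
  have hk₁ : (k : ℝ) - 1 ≠ 0 := by linarith
  rw [phiSpin]
  field_simp
  ring

theorem phiSpin_le_one (hk : 2 ≤ k) : phiSpin k ≤ 1 := by
  have hk : (2 : ℝ) ≤ k := by exact_mod_cast hk
  exact div_le_one_of_le₀ (by linarith) (by linarith)

theorem sub_one_mul_pow_mul_one_sub_le_phiSpin_pow (hk : 2 ≤ k) {φ : ℝ} (hφ : 0 ≤ φ) :
    (k - 1) * φ ^ (k - 2) * (1 - φ) ≤ phiSpin k ^ (k - 2) := by
  obtain ⟨n, rfl⟩ := Nat.exists_eq_add_of_le' hk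
  have hn : ((n + 2 : ℕ) : ℝ) - 1 = n + 1 := by push_cast; ring
  have hn' : ((n + 2 : ℕ) : ℝ) - 2 = n := by push_cast; ring
  simpa only [phiSpin, hn, hn', Nat.add_sub_cancel] using succ_mul_pow_mul_one_sub_le n hφ

theorem alphaSpin_mul_div_two_pow (hk : k ≠ 0) :
    alphaSpin k * k / 2 ^ k = (phiSpin k ^ (k - 2))⁻¹ := by
  rw [← inv_pow, phiSpin, inv_div, alphaSpin]
  field_simp

theorem alphaSpin_pos (hk : 3 ≤ k) : 0 < alphaSpin k := by
  have hk : (3 : ℝ) ≤ k := by exact_mod_cast hk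
  have hk₁ : 0 < (k : ℝ) - 1 := by linarith
  have hk₂ : 0 < (k : ℝ) - 2 := by linarith
  unfold alphaSpin
  positivity

theorem alphaSpin_le_of_tangent (hk : 2 ≤ k) {α θ φ : ℝ} (hφ : φ ∈ Set.Icc (0 : ℝ) 1)
    (hfix : gTheta k α θ φ = φ) (hderiv : gThetaDeriv k α θ φ = 1) : alphaSpin k ≤ α := by
  rw [gThetaDeriv_eq_of_gTheta_eq hfix] at hderiv
  set factor := ((k : ℝ) - 1) * φ ^ (k - 2) * (1 - φ)
  have hk₁ : (2 : ℝ) ≤ k := by exact_mod_cast hk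
  have factor_pos : 0 < factor :=
    (mul_nonneg (mul_nonneg (by linarith) (pow_nonneg hφ.1 _)) (sub_nonneg.2 hφ.2)).lt_of_ne'
      (right_ne_zero_of_mul_eq_one hderiv)
  have rate_le : alphaSpin k * k / 2 ^ k ≤ α * k / 2 ^ k :=
    calc alphaSpin k * k / 2 ^ k
      _ = (phiSpin k ^ (k - 2))⁻¹ := alphaSpin_mul_div_two_pow (by lia)
      _ ≤ factor⁻¹ :=
        inv_anti₀ factor_pos (sub_one_mul_pow_mul_one_sub_le_phiSpin_pow hk hφ.1)
      _ = α * k / 2 ^ k := (eq_inv_of_mul_eq_one_left hderiv).symm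
  rwa [div_le_div_iff_of_pos_right (by positivity), mul_le_mul_iff_left₀ (by linarith)] at rate_le

theorem exists_tangent_alphaSpin (hk : 3 ≤ k) :
    ∃ θ ∈ Set.Icc (0 : ℝ) 1, gTheta k (alphaSpin k) θ (phiSpin k) = phiSpin k ∧
      gThetaDeriv k (alphaSpin k) θ (phiSpin k) = 1 := by
  have hpow : phiSpin k ^ (k - 2) ≠ 0 := (pow_pos (phiSpin_pos hk) _).ne'
  have hrate : alphaSpin k * k / 2 ^ k = (phiSpin k ^ (k - 2))⁻¹ :=
    alphaSpin_mul_div_two_pow (by lia)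
  have hexponent : alphaSpin k * k / 2 ^ k * phiSpin k ^ (k - 1) = phiSpin k := by
    rw [hrate, show k - 1 = k - 2 + 1 by lia, pow_succ, inv_mul_cancel_left₀ hpow]
  obtain ⟨θ, hθ, hfix⟩ := exists_gTheta_eq (phiSpin_le_one (by lia)) hexponent.le
  refine ⟨θ, hθ, hfix, ?_⟩
  rw [gThetaDeriv_eq_of_gTheta_eq hfix, hrate, mul_right_comm,
    sub_one_mul_one_sub_phiSpin (by lia), one_mul, inv_mul_cancel₀ hpow]

end Spinodal

/-- the tangency set
`T(k) = {α > 0 : ∃ θ,φ ∈ [0,1], g_θ(φ) = φ ∧ g_θ'(φ) = 1}` is nonempty, its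
infimum is `α̂_spin(k)` and it is attained (i.e. `α̂_spin(k)` is the least
element of `T(k)`), with tangency point `φ = (k-2)/(k-1)`. -/
theorem tangency_set_least_element
    (k : ℕ) (hk : 3 ≤ k) :
    (letI T : Set ℝ := {α : ℝ | 0 < α ∧ ∃ θ ∈ Set.Icc (0 : ℝ) 1,
        ∃ φ ∈ Set.Icc (0 : ℝ) 1, gTheta k α θ φ = φ ∧ gThetaDeriv k α θ φ = 1}
     T.Nonempty ∧ IsLeast T (alphaSpin k)) ∧
    ∃ θ ∈ Set.Icc (0 : ℝ) 1,
      gTheta k (alphaSpin k) θ (((k : ℝ) - 2) / ((k : ℝ) - 1)) =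
          ((k : ℝ) - 2) / ((k : ℝ) - 1) ∧
      gThetaDeriv k (alphaSpin k) θ (((k : ℝ) - 2) / ((k : ℝ) - 1)) = 1 := by
  obtain ⟨θ, hθ, hfix, hderiv⟩ := exists_tangent_alphaSpin hk
  have hφ : phiSpin k ∈ Set.Icc (0 : ℝ) 1 := ⟨(phiSpin_pos hk).le, phiSpin_le_one (by lia)⟩
  have hmem : 0 < alphaSpin k ∧ ∃ θ ∈ Set.Icc (0 : ℝ) 1, ∃ φ ∈ Set.Icc (0 : ℝ) 1,
      gTheta k (alphaSpin k) θ φ = φ ∧ gThetaDeriv k (alphaSpin k) θ φ = 1 :=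
    ⟨alphaSpin_pos hk, θ, hθ, phiSpin k, hφ, hfix, hderiv⟩
  refine ⟨⟨⟨_, hmem⟩, hmem, ?_⟩, θ, hθ, hfix, hderiv⟩
  rintro α ⟨-, θ', -, φ, hφ', hfix', hderiv'⟩
  exact alphaSpin_le_of_tangent (by lia) hφ' hfix' hderiv'
end
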